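/- There exist positive constants C* and N* with C*·N* ≥ 1 and the following property: for any λ > 0 and any T > 0, every smooth function u : [0,T] × ℝ² → ℝ², 2π-periodic in each spatial coordinate, that solves the castrated Kuramoto–Sivashinsky equation ∂ₜu + Δ²u + λΔu = −P_{N(u)}((u_{N(u)}·∇)u^{N(u)}) − P_{N(u)}((u^{N(u)}·∇)u) − (I − P_{N(u)})((u·∇)u), where N(u(t)) = C*(‖u(t)‖_{L²(Ω)} + N*), satisfies for all t ∈ [0,T]: ‖u(t)‖²_{L²(Ω)} + ∫₀ᵗ e^{4(max(λ,1))²(t−s)} ( ‖u(s)‖²_{L²(Ω)} + ‖Δu(s)‖²_{L²(Ω)} ) ds ≤ e^{4(max(λ,1))² t} ‖u(0)‖²_{L²(Ω)}. -/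

import Mathlib

/-! The castrated nonlinearity is designed so that, paired with `u` in `L²(Ω)`, every term contains a
high-frequency factor `h = (I - P_N) u`. Since `P_N` is symmetric (`ip_PN_symm`), the pairing is
`-⟨(u_N·∇)h, u_N⟩ - ⟨(h·∇)u, u_N⟩ - ⟨(u·∇)u, h⟩`. By Parseval's identity high frequencies gain
`N⁻¹` per derivative, `N ‖h‖ ≤ ‖∇u‖` and `N ‖∂ⱼh‖ ≤ ‖∇²u‖` (`nrm_high_le`). Together with
`‖∇f‖² ≤ ‖f‖ ‖Δf‖`, `‖∇²f‖ = ‖Δf‖` and the embedding `‖f‖_∞ ≤ 2 (‖f‖ + ‖Δf‖)` (`sobolev2`), each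
of the twelve scalar trilinear integrals is at most `2 (U + D) U D / N`, where `U = ‖u‖` and
`D = ‖Δu‖` (`nonlin_le`).

As `N = C* (U + N*)`, the factor `U / N` is at most `1 / C*`: with `C* = 192` and `N* = 1` the
nonlinear contribution is bounded by `(U + D) D / 8`, which the dissipation `D²` absorbs whatever
the size of `u`. The remaining linear term is `λ U D`, and Young's inequality gives
`d/dt ‖u‖² + ‖u‖² + ‖Δu‖² ≤ 4 max(λ,1)² ‖u‖²` (`energy_ineq`). The claim is the integrated form of
this differential inequality (`gronwall`), once the energy is known to be differentiable in time
(`energy_hasDerivAt`).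

All computations use the real trigonometric modes `cos(ℓ·x)`, `sin(ℓ·x)`, in terms of which `P_N`
is a finite sum (`PN_eq`).
-/

open Real MeasureTheory Set intervalIntegral
open scoped Real Classical

noncomputable section

/-- Partial derivative in the first spatial coordinate. -/
def pd1 (f : ℝ × ℝ → ℝ) (x : ℝ × ℝ) : ℝ := deriv (fun s => f (s, x.2)) x.1

/-- Partial derivative in the second spatial coordinate. -/
def pd2 (f : ℝ × ℝ → ℝ) (x : ℝ × ℝ) : ℝ := deriv (fun s => f (x.1, s)) x.2

/-- Advective derivative `(v·∇)f = v¹ ∂₁f + v² ∂₂f`. -/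
def adv (v : ℝ × ℝ → ℝ × ℝ) (f : ℝ × ℝ → ℝ) (x : ℝ × ℝ) : ℝ :=
  (v x).1 * pd1 f x + (v x).2 * pd2 f x

/-- Divergence `∇·v = ∂₁v¹ + ∂₂v²`. -/
def divg (v : ℝ × ℝ → ℝ × ℝ) (x : ℝ × ℝ) : ℝ :=
  pd1 (fun y => (v y).1) x + pd2 (fun y => (v y).2) x

/-- Scalar curl `∇⊥·v = ∂₁v² − ∂₂v¹`. -/
def curl2 (v : ℝ × ℝ → ℝ × ℝ) (x : ℝ × ℝ) : ℝ :=
  pd1 (fun y => (v y).2) x - pd2 (fun y => (v y).1) x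

/-- Laplacian `Δf = ∂₁²f + ∂₂²f`. -/
def lap (f : ℝ × ℝ → ℝ) : ℝ × ℝ → ℝ := fun x => pd1 (pd1 f) x + pd2 (pd2 f) x

/-- `|∇v|² = Σ_{i,j} (∂ᵢvʲ)²`. -/
def gradNormSq (v : ℝ × ℝ → ℝ × ℝ) (x : ℝ × ℝ) : ℝ :=
  (pd1 (fun y => (v y).1) x)^2 + (pd2 (fun y => (v y).1) x)^2 +
  (pd1 (fun y => (v y).2) x)^2 + (pd2 (fun y => (v y).2) x)^2

/-- The periodic box `Ω = [0,2π]²`. -/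
def Omega2 : Set (ℝ × ℝ) := Set.Icc (0:ℝ) (2*π) ×ˢ Set.Icc (0:ℝ) (2*π)

/-- `2π`-periodicity in each coordinate for a vector field. -/
def Periodic2 (f : ℝ × ℝ → ℝ × ℝ) : Prop :=
  ∀ x : ℝ × ℝ, f (x.1 + 2*π, x.2) = f x ∧ f (x.1, x.2 + 2*π) = f x

/-- Squared `L²(Ω)` norm of a vector field. -/
def l2sq (v : ℝ × ℝ → ℝ × ℝ) : ℝ := ∫ x in Omega2, ((v x).1^2 + (v x).2^2)

/-- Squared `L²(Ω)` norm of `Δv`. -/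
def l2sqLap (v : ℝ × ℝ → ℝ × ℝ) : ℝ :=
  ∫ x in Omega2, ((lap (fun y => (v y).1) x)^2 + (lap (fun y => (v y).2) x)^2)

/-- `ℓ`-th Fourier coefficient of a scalar field. -/
def fc (f : ℝ × ℝ → ℝ) (ℓ : ℤ × ℤ) : ℂ :=
  ((2*π)^2)⁻¹ • ∫ x in Omega2,
    (f x : ℂ) * Complex.exp (-(Complex.I) * ((ℓ.1:ℂ) * (x.1:ℂ) + (ℓ.2:ℂ) * (x.2:ℂ)))

/-- `ℓ`-th Fourier coefficient of a vector field. -/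
def fcVec (v : ℝ × ℝ → ℝ × ℝ) (ℓ : ℤ × ℤ) : ℂ × ℂ :=
  (fc (fun y => (v y).1) ℓ, fc (fun y => (v y).2) ℓ)

/-- `|v̂_ℓ|²`. -/
def coefAbsSq (v : ℝ × ℝ → ℝ × ℝ) (ℓ : ℤ × ℤ) : ℝ :=
  ‖fc (fun y => (v y).1) ℓ‖^2 + ‖fc (fun y => (v y).2) ℓ‖^2

/-- Squared homogeneous Sobolev norm `‖v‖²_{Ḣ^κ} = (2π)² Σ_{ℓ≠0} |ℓ|^{2κ}|v̂_ℓ|²`. -/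
def hnormSq (v : ℝ × ℝ → ℝ × ℝ) (κ : ℝ) : ℝ :=
  (2*π)^2 * ∑' ℓ : ℤ × ℤ,
    if ℓ = 0 then 0 else ((ℓ.1:ℝ)^2 + (ℓ.2:ℝ)^2) ^ κ * coefAbsSq v ℓ

/-- Homogeneous Sobolev norm `‖v‖_{Ḣ^κ}`. -/
def hnorm (v : ℝ × ℝ → ℝ × ℝ) (κ : ℝ) : ℝ := Real.sqrt (hnormSq v κ)

/-- Projection onto Fourier modes with `|ℓ| ≤ N` (scalar fields). -/
def PN (N : ℝ) (f : ℝ × ℝ → ℝ) (x : ℝ × ℝ) : ℝ :=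
  ∑' ℓ : ℤ × ℤ,
    if ((ℓ.1:ℝ)^2 + (ℓ.2:ℝ)^2) ≤ N^2 then
      (fc f ℓ * Complex.exp (Complex.I * ((ℓ.1:ℂ) * (x.1:ℂ) + (ℓ.2:ℂ) * (x.2:ℂ)))).re
    else 0

/-- Projection onto Fourier modes with `|ℓ| ≤ N` (vector fields). -/
def PNvec (N : ℝ) (v : ℝ × ℝ → ℝ × ℝ) (x : ℝ × ℝ) : ℝ × ℝ :=
  (PN N (fun y => (v y).1) x, PN N (fun y => (v y).2) x)

/-- High-mode part `(I − P_N)v`. -/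
def highN (N : ℝ) (v : ℝ × ℝ → ℝ × ℝ) (x : ℝ × ℝ) : ℝ × ℝ := v x - PNvec N v x

/-- `(v·∇)w` as a vector field. -/
def advVec (v w : ℝ × ℝ → ℝ × ℝ) (x : ℝ × ℝ) : ℝ × ℝ :=
  (adv v (fun y => (w y).1) x, adv v (fun y => (w y).2) x)

/-- Laplacian of a vector field. -/
def lapVec (v : ℝ × ℝ → ℝ × ℝ) (x : ℝ × ℝ) : ℝ × ℝ :=
  (lap (fun y => (v y).1) x, lap (fun y => (v y).2) x)

/-- Spatial mean `(2π)⁻² ∫_Ω v`. -/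
def meanOf (v : ℝ × ℝ → ℝ × ℝ) : ℝ × ℝ := ((2*π)^2)⁻¹ • ∫ x in Omega2, v x

/-- Joint smoothness in `(t,x)`. -/
def SmoothTS (u : ℝ → ℝ × ℝ → ℝ × ℝ) : Prop :=
  ∀ n : ℕ, ContDiff ℝ n (fun p : ℝ × (ℝ × ℝ) => u p.1 p.2)

/-- The 2D inviscid Burgers equation `∂ₜu + (u·∇)u = 0` on `[0,T] × ℝ²`. -/
def IsBurgers (T : ℝ) (u : ℝ → ℝ × ℝ → ℝ × ℝ) : Prop :=
  ∀ t ∈ Set.Icc (0:ℝ) T, ∀ x : ℝ × ℝ,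
    deriv (fun s => (u s x).1) t + adv (u t) (fun y => (u t y).1) x = 0 ∧
    deriv (fun s => (u s x).2) t + adv (u t) (fun y => (u t y).2) x = 0

/-- The 2D Kuramoto–Sivashinsky equation `∂ₜu + (u·∇)u = −Δ²u − λΔu` on `[0,T] × ℝ²`. -/
def IsKSE (lam T : ℝ) (u : ℝ → ℝ × ℝ → ℝ × ℝ) : Prop :=
  ∀ t ∈ Set.Icc (0:ℝ) T, ∀ x : ℝ × ℝ,
    deriv (fun s => (u s x).1) t + adv (u t) (fun y => (u t y).1) x
      = -(lap (lap (fun y => (u t y).1)) x) - lam * lap (fun y => (u t y).1) x ∧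
    deriv (fun s => (u s x).2) t + adv (u t) (fun y => (u t y).2) x
      = -(lap (lap (fun y => (u t y).2)) x) - lam * lap (fun y => (u t y).2) x

/-- The solution-dependent frequency cutoff `N(u(t)) = C*(‖u(t)‖_{L²} + N*)`. -/
def NCut (Cstar Nstar : ℝ) (u : ℝ → ℝ × ℝ → ℝ × ℝ) (t : ℝ) : ℝ :=
  Cstar * (Real.sqrt (l2sq (u t)) + Nstar)

/-- The castrated 2D Kuramoto–Sivashinsky equation
`∂ₜu + Δ²u + λΔu = −P_N((u_N·∇)u^N) − P_N((u^N·∇)u) − (I−P_N)((u·∇)u)`,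
with `N = N(u(t)) = C*(‖u(t)‖_{L²} + N*)`. -/
def IsCastratedKSE (Cstar Nstar lam T : ℝ) (u : ℝ → ℝ × ℝ → ℝ × ℝ) : Prop :=
  ∀ t ∈ Set.Icc (0:ℝ) T, ∀ x : ℝ × ℝ,
    deriv (fun s => u s x) t + lapVec (lapVec (u t)) x + lam • lapVec (u t) x
      = -(PNvec (NCut Cstar Nstar u t)
            (advVec (PNvec (NCut Cstar Nstar u t) (u t)) (highN (NCut Cstar Nstar u t) (u t))) x)
        - PNvec (NCut Cstar Nstar u t)
            (advVec (highN (NCut Cstar Nstar u t) (u t)) (u t)) x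
        - (advVec (u t) (u t) x
            - PNvec (NCut Cstar Nstar u t) (advVec (u t) (u t)) x)

open scoped ContDiff Topology

/-- A smooth real function on the plane that is `2π`-periodic in each variable. -/
structure SP (f : ℝ × ℝ → ℝ) : Prop where
  smooth : ContDiff ℝ ∞ f
  per1 : ∀ x : ℝ × ℝ, f (x.1 + 2*π, x.2) = f x
  per2 : ∀ x : ℝ × ℝ, f (x.1, x.2 + 2*π) = f x

/-- The `L²(Ω)` inner product of scalar fields. -/
def ip (f g : ℝ × ℝ → ℝ) : ℝ := ∫ x in Omega2, f x * g x

/-! ### Partial derivatives -/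

lemma hasDerivAt_pd1 {f : ℝ × ℝ → ℝ} (hf : Differentiable ℝ f) (x : ℝ × ℝ) :
    HasDerivAt (fun s => f (s, x.2)) (fderiv ℝ f x (1, 0)) x.1 := by
  have h1 : HasDerivAt (fun s : ℝ => (s, x.2)) ((1 : ℝ), (0 : ℝ)) x.1 :=
    (hasDerivAt_id x.1).prodMk (hasDerivAt_const x.1 x.2)
  exact (hf x).hasFDerivAt.comp_hasDerivAt x.1 h1

lemma hasDerivAt_pd2 {f : ℝ × ℝ → ℝ} (hf : Differentiable ℝ f) (x : ℝ × ℝ) :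
    HasDerivAt (fun s => f (x.1, s)) (fderiv ℝ f x (0, 1)) x.2 := by
  have h1 : HasDerivAt (fun s : ℝ => (x.1, s)) ((0 : ℝ), (1 : ℝ)) x.2 :=
    (hasDerivAt_const x.2 x.1).prodMk (hasDerivAt_id x.2)
  exact (hf x).hasFDerivAt.comp_hasDerivAt x.2 h1

lemma pd1_eq {f : ℝ × ℝ → ℝ} (hf : Differentiable ℝ f) (x : ℝ × ℝ) :
    pd1 f x = fderiv ℝ f x (1, 0) := (hasDerivAt_pd1 hf x).deriv

lemma pd2_eq {f : ℝ × ℝ → ℝ} (hf : Differentiable ℝ f) (x : ℝ × ℝ) :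
    pd2 f x = fderiv ℝ f x (0, 1) := (hasDerivAt_pd2 hf x).deriv

lemma SP.diff {f : ℝ × ℝ → ℝ} (hf : SP f) : Differentiable ℝ f :=
  hf.smooth.differentiable (by simp)

lemma SP.cont {f : ℝ × ℝ → ℝ} (hf : SP f) : Continuous f := hf.smooth.continuous

lemma SP.pd1 {f : ℝ × ℝ → ℝ} (hf : SP f) : SP (pd1 f) where
  smooth := by
    rw [funext (pd1_eq hf.diff)]
    exact (hf.smooth.fderiv_right (m := ∞) (by simp)).clm_apply contDiff_const
  per1 x := by
    unfold _root_.pd1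
    simp only
    rw [← deriv_comp_add_const]
    congr 1
    funext s
    exact hf.per1 (s, x.2)
  per2 x := by
    unfold _root_.pd1
    simp only
    congr 1
    funext s
    exact hf.per2 (s, x.2)

lemma SP.pd2 {f : ℝ × ℝ → ℝ} (hf : SP f) : SP (pd2 f) where
  smooth := by
    rw [funext (pd2_eq hf.diff)]
    exact (hf.smooth.fderiv_right (m := ∞) (by simp)).clm_apply contDiff_const
  per1 x := by
    unfold _root_.pd2
    simp only
    congr 1
    funext s
    exact hf.per1 (x.1, s)
  per2 x := by
    unfold _root_.pd2
    simp only
    rw [← deriv_comp_add_const]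
    congr 1
    funext s
    exact hf.per2 (x.1, s)

lemma SP.add {f g : ℝ × ℝ → ℝ} (hf : SP f) (hg : SP g) : SP (fun x => f x + g x) where
  smooth := hf.smooth.add hg.smooth
  per1 x := by simp only [hf.per1 x, hg.per1 x]
  per2 x := by simp only [hf.per2 x, hg.per2 x]

lemma SP.sub {f g : ℝ × ℝ → ℝ} (hf : SP f) (hg : SP g) : SP (fun x => f x - g x) where
  smooth := hf.smooth.sub hg.smooth
  per1 x := by simp only [hf.per1 x, hg.per1 x]
  per2 x := by simp only [hf.per2 x, hg.per2 x]

lemma SP.mul {f g : ℝ × ℝ → ℝ} (hf : SP f) (hg : SP g) : SP (fun x => f x * g x) where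
  smooth := hf.smooth.mul hg.smooth
  per1 x := by simp only [hf.per1 x, hg.per1 x]
  per2 x := by simp only [hf.per2 x, hg.per2 x]

lemma SP.const (c : ℝ) : SP (fun _ => c) where
  smooth := contDiff_const
  per1 _ := rfl
  per2 _ := rfl

lemma SP.sum {ι : Type*} (S : Finset ι) {f : ι → ℝ × ℝ → ℝ} (hf : ∀ i, SP (f i)) :
    SP (fun x => ∑ i ∈ S, f i x) where
  smooth := ContDiff.sum fun i _ => (hf i).smooth
  per1 x := Finset.sum_congr rfl fun i _ => (hf i).per1 x
  per2 x := Finset.sum_congr rfl fun i _ => (hf i).per2 x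

lemma SP.lap {f : ℝ × ℝ → ℝ} (hf : SP f) : SP (lap f) := hf.pd1.pd1.add hf.pd2.pd2

lemma pd1_mul {f g : ℝ × ℝ → ℝ} (hf : Differentiable ℝ f) (hg : Differentiable ℝ g) (x : ℝ × ℝ) :
    pd1 (fun y => f y * g y) x = pd1 f x * g x + f x * pd1 g x := by
  have := (hasDerivAt_pd1 hf x).mul (hasDerivAt_pd1 hg x)
  rw [pd1_eq hf, pd1_eq hg]
  exact this.deriv

lemma pd2_mul {f g : ℝ × ℝ → ℝ} (hf : Differentiable ℝ f) (hg : Differentiable ℝ g) (x : ℝ × ℝ) :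
    pd2 (fun y => f y * g y) x = pd2 f x * g x + f x * pd2 g x := by
  have := (hasDerivAt_pd2 hf x).mul (hasDerivAt_pd2 hg x)
  rw [pd2_eq hf, pd2_eq hg]
  exact this.deriv

lemma pd1_sub {f g : ℝ × ℝ → ℝ} (hf : Differentiable ℝ f) (hg : Differentiable ℝ g) :
    pd1 (fun y => f y - g y) = fun x => pd1 f x - pd1 g x := by
  funext x
  have := (hasDerivAt_pd1 hf x).sub (hasDerivAt_pd1 hg x)
  rw [pd1_eq hf, pd1_eq hg]
  exact this.deriv

lemma pd2_sub {f g : ℝ × ℝ → ℝ} (hf : Differentiable ℝ f) (hg : Differentiable ℝ g) :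
    pd2 (fun y => f y - g y) = fun x => pd2 f x - pd2 g x := by
  funext x
  have := (hasDerivAt_pd2 hf x).sub (hasDerivAt_pd2 hg x)
  rw [pd2_eq hf, pd2_eq hg]
  exact this.deriv

/-- Symmetry of second derivatives. -/
lemma pd1_pd2_comm {f : ℝ × ℝ → ℝ} (hf : SP f) : pd1 (pd2 f) = pd2 (pd1 f) := by
  funext x
  have hd : Differentiable ℝ (fderiv ℝ f) :=
    (hf.smooth.fderiv_right (m := ∞) (by simp)).differentiable (by simp)
  rw [pd1_eq hf.pd2.diff, pd2_eq hf.pd1.diff, funext (pd1_eq hf.diff), funext (pd2_eq hf.diff)]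
  have key : ∀ v w : ℝ × ℝ, fderiv ℝ (fun y => fderiv ℝ f y v) x w = fderiv ℝ (fderiv ℝ f) x w v := by
    intro v w
    rw [fderiv_clm_apply (hd x) (differentiableAt_const v)]
    simp
  rw [key, key]
  have hs : IsSymmSndFDerivAt ℝ f x := hf.smooth.contDiffAt.isSymmSndFDerivAt (by
    rw [minSmoothness_of_isRCLikeNormedField]; exact WithTop.coe_le_coe.2 (le_top : (2 : ℕ∞) ≤ ⊤))
  exact hs _ _

/-! ### Integration over the periodic box -/

lemma isCompact_Omega2 : IsCompact Omega2 := isCompact_Icc.prod isCompact_Icc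

lemma measurableSet_Omega2 : MeasurableSet Omega2 := measurableSet_Icc.prod measurableSet_Icc

lemma intOn {E : Type*} [NormedAddCommGroup E] {f : ℝ × ℝ → E} (hf : Continuous f) :
    IntegrableOn f Omega2 := hf.continuousOn.integrableOn_compact isCompact_Omega2

lemma int_box {E : Type*} [NormedAddCommGroup E] [NormedSpace ℝ E] {f : ℝ × ℝ → E}
    (hf : Continuous f) :
    ∫ x in Omega2, f x = ∫ a in (0:ℝ)..(2*π), ∫ b in (0:ℝ)..(2*π), f (a, b) := by
  have h := intOn hf
  unfold Omega2 at *
  rw [Measure.volume_eq_prod] at *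
  rw [setIntegral_prod _ h, intervalIntegral.integral_of_le (by positivity), integral_Icc_eq_integral_Ioc]
  congr 1
  funext a
  rw [intervalIntegral.integral_of_le (by positivity), integral_Icc_eq_integral_Ioc]

lemma int_box_swap {E : Type*} [NormedAddCommGroup E] [NormedSpace ℝ E] {f : ℝ × ℝ → E}
    (hf : Continuous f) :
    ∫ x in Omega2, f x = ∫ b in (0:ℝ)..(2*π), ∫ a in (0:ℝ)..(2*π), f (a, b) := by
  have : ∫ x in Omega2, f x = ∫ x in Omega2, f x.swap := by
    unfold Omega2
    rw [Measure.volume_eq_prod]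
    exact (setIntegral_prod_swap _ _ _).symm
  rw [this]
  exact int_box (hf.comp continuous_swap)

lemma int_pd1 {f : ℝ × ℝ → ℝ} (hf : SP f) : ∫ x in Omega2, pd1 f x = 0 := by
  rw [int_box_swap hf.pd1.cont]
  have : ∀ b : ℝ, ∫ a in (0:ℝ)..(2*π), pd1 f (a, b) = 0 := by
    intro b
    rw [intervalIntegral.integral_eq_sub_of_hasDerivAt (f := fun a => f (a, b))]
    · have := hf.per1 (0, b)
      simp only [zero_add] at this
      rw [this, sub_self]
    · intro a _
      rw [pd1_eq hf.diff]
      exact hasDerivAt_pd1 hf.diff (a, b)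
    · exact (hf.pd1.cont.comp (by fun_prop)).intervalIntegrable _ _
  simp [this]

lemma int_pd2 {f : ℝ × ℝ → ℝ} (hf : SP f) : ∫ x in Omega2, pd2 f x = 0 := by
  rw [int_box hf.pd2.cont]
  have : ∀ a : ℝ, ∫ b in (0:ℝ)..(2*π), pd2 f (a, b) = 0 := by
    intro a
    rw [intervalIntegral.integral_eq_sub_of_hasDerivAt (f := fun b => f (a, b))]
    · have := hf.per2 (a, 0)
      simp only [zero_add] at this
      rw [this, sub_self]
    · intro b _
      rw [pd2_eq hf.diff]
      exact hasDerivAt_pd2 hf.diff (a, b)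
    · exact (hf.pd2.cont.comp (by fun_prop)).intervalIntegrable _ _
  simp [this]

lemma ip_comm (f g : ℝ × ℝ → ℝ) : ip f g = ip g f := by simp only [ip, mul_comm]

lemma ip_add_left {f g h : ℝ × ℝ → ℝ} (hf : Continuous f) (hg : Continuous g) (hh : Continuous h) :
    ip (fun x => f x + g x) h = ip f h + ip g h := by
  unfold ip
  simp only [add_mul]
  exact MeasureTheory.integral_add (intOn (hf.mul hh)) (intOn (hg.mul hh))

lemma ip_sub_left {f g h : ℝ × ℝ → ℝ} (hf : Continuous f) (hg : Continuous g) (hh : Continuous h) :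
    ip (fun x => f x - g x) h = ip f h - ip g h := by
  unfold ip
  simp only [sub_mul]
  exact MeasureTheory.integral_sub (intOn (hf.mul hh)) (intOn (hg.mul hh))

lemma ip_const_mul_left (c : ℝ) (f h : ℝ × ℝ → ℝ) :
    ip (fun x => c * f x) h = c * ip f h := by
  unfold ip
  rw [← MeasureTheory.integral_const_mul]
  simp only [mul_assoc]

lemma ip_self_nonneg (f : ℝ × ℝ → ℝ) : 0 ≤ ip f f :=
  integral_nonneg fun x => mul_self_nonneg (f x)

lemma ip_pd1 {f g : ℝ × ℝ → ℝ} (hf : SP f) (hg : SP g) : ip (pd1 f) g = - ip f (pd1 g) := by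
  have h := int_pd1 (hf.mul hg)
  simp only [pd1_mul hf.diff hg.diff] at h
  rw [integral_add (intOn (hf.pd1.mul hg).cont) (intOn (hf.mul hg.pd1).cont)] at h
  unfold ip
  linarith

lemma ip_pd2 {f g : ℝ × ℝ → ℝ} (hf : SP f) (hg : SP g) : ip (pd2 f) g = - ip f (pd2 g) := by
  have h := int_pd2 (hf.mul hg)
  simp only [pd2_mul hf.diff hg.diff] at h
  rw [integral_add (intOn (hf.pd2.mul hg).cont) (intOn (hf.mul hg.pd2).cont)] at h
  unfold ip
  linarith

lemma ip_lap_left {f g : ℝ × ℝ → ℝ} (hf : SP f) (hg : Continuous g) :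
    ip (lap f) g = ip (pd1 (pd1 f)) g + ip (pd2 (pd2 f)) g :=
  ip_add_left hf.pd1.pd1.cont hf.pd2.pd2.cont hg

lemma ip_lap {f g : ℝ × ℝ → ℝ} (hf : SP f) (hg : SP g) : ip (lap f) g = ip f (lap g) := by
  rw [ip_lap_left hf hg.cont, ip_comm f, ip_lap_left hg hf.cont,
    ip_pd1 hf.pd1 hg, ip_pd2 hf.pd2 hg, ip_pd1 hg.pd1 hf, ip_pd2 hg.pd2 hf,
    ip_comm (pd1 g), ip_comm (pd2 g)]

/-! ### Norm inequalities -/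

/-- The `L²(Ω)` norm of a scalar field. -/
def nrm (f : ℝ × ℝ → ℝ) : ℝ := √(ip f f)

lemma nrm_nonneg (f : ℝ × ℝ → ℝ) : 0 ≤ nrm f := Real.sqrt_nonneg _

lemma nrm_sq (f : ℝ × ℝ → ℝ) : nrm f ^ 2 = ip f f := Real.sq_sqrt (ip_self_nonneg f)

lemma ip_abs_le {f g : ℝ × ℝ → ℝ} (hf : Continuous f) (hg : Continuous g) :
    ∫ x in Omega2, |f x| * |g x| ≤ nrm f * nrm g := by
  have key : ∀ t : ℝ, 0 ≤ ip g g * (t * t) + (-2 * ∫ x in Omega2, |f x| * |g x|) * t + ip f f := by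
    intro t
    have h0 : 0 ≤ ∫ x in Omega2, (|f x| - t * |g x|)^2 := integral_nonneg fun x => sq_nonneg _
    have h1 : ∫ x in Omega2, (|f x| - t * |g x|)^2
        = (t * t) * ip g g + (-2 * t) * (∫ x in Omega2, |f x| * |g x|) + ip f f := by
      unfold ip
      rw [← MeasureTheory.integral_const_mul, ← MeasureTheory.integral_const_mul,
        ← integral_add (intOn (by fun_prop)) (intOn (by fun_prop)),
        ← integral_add (intOn (by fun_prop)) (intOn (by fun_prop))]
      congr 1
      funext x
      rw [← abs_mul_abs_self (f x), ← abs_mul_abs_self (g x)]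
      ring
    linarith
  have hd := discrim_le_zero key
  unfold discrim at hd
  refine abs_le_of_sq_le_sq' ?_ (mul_nonneg (nrm_nonneg f) (nrm_nonneg g)) |>.2
  rw [mul_pow, nrm_sq, nrm_sq]
  linarith

lemma ip_le {f g : ℝ × ℝ → ℝ} (hf : Continuous f) (hg : Continuous g) :
    |ip f g| ≤ nrm f * nrm g := by
  refine le_trans ?_ (ip_abs_le hf hg)
  unfold ip
  refine (MeasureTheory.abs_integral_le_integral_abs).trans (le_of_eq ?_)
  simp only [abs_mul]

/-- Hölder's inequality with exponents `∞, 2, 2`. -/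
lemma trilin_le {f g h : ℝ × ℝ → ℝ} {S : ℝ} (hf : Continuous f) (hg : Continuous g)
    (hh : Continuous h) (hS : 0 ≤ S) (hfS : ∀ x ∈ Omega2, |f x| ≤ S) :
    |∫ x in Omega2, f x * g x * h x| ≤ S * (nrm g * nrm h) := by
  refine (MeasureTheory.abs_integral_le_integral_abs).trans ?_
  refine le_trans ?_ (mul_le_mul_of_nonneg_left (ip_abs_le hg hh) hS)
  rw [← MeasureTheory.integral_const_mul]
  refine setIntegral_mono_on (intOn (by fun_prop)) (intOn (by fun_prop)) measurableSet_Omega2 ?_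
  intro x hx
  rw [abs_mul, abs_mul, mul_assoc]
  exact mul_le_mul_of_nonneg_right (hfS x hx) (by positivity)

/-- `‖∇f‖² ≤ ‖f‖ ‖Δf‖`. -/
lemma grad_le {f : ℝ × ℝ → ℝ} (hf : SP f) :
    nrm (pd1 f) ^ 2 + nrm (pd2 f) ^ 2 ≤ nrm f * nrm (lap f) := by
  have h1 : nrm (pd1 f) ^ 2 + nrm (pd2 f) ^ 2 = - ip f (lap f) := by
    rw [nrm_sq, nrm_sq, ip_pd1 hf hf.pd1, ip_pd2 hf hf.pd2, ip_comm f (lap f),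
      ip_lap_left hf hf.cont, ip_comm f, ip_comm f]
    ring
  have := ip_le hf.cont hf.lap.cont
  rw [h1]
  exact (neg_le_abs _).trans this

/-- `‖∇²f‖ = ‖Δf‖`. -/
lemma hess_eq {f : ℝ × ℝ → ℝ} (hf : SP f) :
    nrm (pd1 (pd1 f)) ^ 2 + 2 * nrm (pd2 (pd1 f)) ^ 2 + nrm (pd2 (pd2 f)) ^ 2
      = nrm (lap f) ^ 2 := by
  have h : nrm (pd2 (pd1 f)) ^ 2 = ip (pd1 (pd1 f)) (pd2 (pd2 f)) := by
    rw [nrm_sq, ip_pd2 hf.pd1 hf.pd1.pd2, ip_pd1 hf.pd1 hf.pd2.pd2, pd1_pd2_comm hf.pd2,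
      pd1_pd2_comm hf]
  rw [h]
  simp only [nrm_sq]
  rw [ip_lap_left hf hf.lap.cont, ip_comm _ (lap f), ip_comm _ (lap f),
    ip_lap_left hf hf.pd1.pd1.cont, ip_lap_left hf hf.pd2.pd2.cont,
    ip_comm (pd2 (pd2 f)) (pd1 (pd1 f))]
  ring

/-! ### Sobolev embedding -/

/-- One-dimensional Sobolev embedding on `[0,2π]`, obtained by averaging
`g(x)² = g(y)² + ∫_y^x 2 g g'` over `y`. -/
lemma sobolev1 {g g' : ℝ → ℝ} (hg : ∀ x, HasDerivAt g (g' x) x) (hg' : Continuous g')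
    {x : ℝ} (hx : x ∈ Icc 0 (2*π)) :
    g x ^ 2 ≤ 2 * ∫ y in (0:ℝ)..(2*π), (g y ^ 2 + g' y ^ 2) := by
  have hgc : Continuous g := continuous_iff_continuousAt.2 fun x => (hg x).continuousAt
  set I := ∫ y in (0:ℝ)..(2*π), (g y ^ 2 + g' y ^ 2) with hI
  have hpi : (0:ℝ) ≤ 2*π := by positivity
  have hpi1 : (1:ℝ) ≤ 2*π := by linarith [Real.pi_gt_three]
  have step : ∀ y ∈ Icc (0:ℝ) (2*π), g x ^ 2 ≤ g y ^ 2 + I := by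
    intro y hy
    have h1 : ∫ z in y..x, 2 * g z * g' z = g x ^ 2 - g y ^ 2 := by
      rw [intervalIntegral.integral_eq_sub_of_hasDerivAt (f := fun z => g z ^ 2)]
      · intro z _
        have := (hg z).pow 2
        exact this.congr_deriv (by simp [mul_assoc])
      · exact Continuous.intervalIntegrable (by fun_prop) _ _
    have h2 : |∫ z in y..x, 2 * g z * g' z| ≤ I := by
      rw [← Real.norm_eq_abs]
      refine (intervalIntegral.norm_integral_le_integral_norm_uIoc).trans ?_
      rw [hI, intervalIntegral.integral_of_le hpi]
      have hsub : uIoc y x ⊆ Ioc 0 (2*π) := by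
        intro z hz
        rw [mem_uIoc] at hz
        rcases hz with h | h
        · exact ⟨hy.1.trans_lt h.1, h.2.trans hx.2⟩
        · exact ⟨hx.1.trans_lt h.1, h.2.trans hy.2⟩
      have hsq : IntegrableOn (fun z => g z ^ 2 + g' z ^ 2) (Ioc 0 (2*π)) :=
        ((Continuous.continuousOn (by fun_prop)).integrableOn_compact isCompact_Icc).mono_set
          Ioc_subset_Icc_self
      have hprod : IntegrableOn (fun z => ‖2 * g z * g' z‖) (uIoc y x) :=
        ((Continuous.continuousOn (by fun_prop)).integrableOn_compact isCompact_Icc).mono_set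
          (hsub.trans Ioc_subset_Icc_self)
      refine (setIntegral_mono_on hprod (hsq.mono_set hsub) measurableSet_uIoc ?_).trans
        (setIntegral_mono_set hsq (ae_of_all _ fun z => by positivity) hsub.eventuallyLE)
      intro z _
      rw [Real.norm_eq_abs, abs_le]
      constructor <;> nlinarith [sq_nonneg (g z + g' z), sq_nonneg (g z - g' z)]
    have := (abs_le.1 h2).2
    linarith
  have h3 : ∫ y in (0:ℝ)..(2*π), g x ^ 2 ≤ ∫ y in (0:ℝ)..(2*π), (g y ^ 2 + I) :=
    intervalIntegral.integral_mono_on hpi (Continuous.intervalIntegrable (by fun_prop) _ _)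
      (Continuous.intervalIntegrable (by fun_prop) _ _) step
  rw [intervalIntegral.integral_add (Continuous.intervalIntegrable (by fun_prop) _ _)
    (Continuous.intervalIntegrable (by fun_prop) _ _)] at h3
  simp only [intervalIntegral.integral_const, sub_zero, smul_eq_mul] at h3
  have h4 : ∫ y in (0:ℝ)..(2*π), g y ^ 2 ≤ I :=
    intervalIntegral.integral_mono_on hpi (Continuous.intervalIntegrable (by fun_prop) _ _)
      (Continuous.intervalIntegrable (by fun_prop) _ _) (fun y _ => by nlinarith [sq_nonneg (g' y)])
  have h5 : 0 ≤ I := intervalIntegral.integral_nonneg hpi (fun y _ => by positivity)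
  by_contra hcon
  push Not at hcon
  nlinarith

/-- The embedding `H² ⊂ L^∞` on the box. -/
lemma sobolev2 {f : ℝ × ℝ → ℝ} (hf : SP f) {x : ℝ × ℝ} (hx : x ∈ Omega2) :
    |f x| ≤ 2 * (nrm f + nrm (lap f)) := by
  have hpi : (0:ℝ) ≤ 2*π := by positivity
  have cf := hf.cont
  have c1 := hf.pd1.cont
  have c2 := hf.pd2.cont
  have c12 := hf.pd1.pd2.cont
  have hA := sobolev1 (g := fun s => f (s, x.2)) (g' := fun s => pd1 f (s, x.2)) (x := x.1)
    (fun s => by rw [pd1_eq hf.diff]; exact hasDerivAt_pd1 hf.diff (s, x.2)) (by fun_prop) hx.1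
  have hB : ∀ s : ℝ, f (s, x.2) ^ 2 ≤
      2 * ∫ r in (0:ℝ)..(2*π), (f (s, r) ^ 2 + pd2 f (s, r) ^ 2) := fun s =>
    sobolev1 (g := fun r => f (s, r)) (g' := fun r => pd2 f (s, r)) (x := x.2)
      (fun r => by rw [pd2_eq hf.diff]; exact hasDerivAt_pd2 hf.diff (s, r)) (by fun_prop) hx.2
  have hC : ∀ s : ℝ, pd1 f (s, x.2) ^ 2 ≤
      2 * ∫ r in (0:ℝ)..(2*π), (pd1 f (s, r) ^ 2 + pd2 (pd1 f) (s, r) ^ 2) := fun s =>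
    sobolev1 (g := fun r => pd1 f (s, r)) (g' := fun r => pd2 (pd1 f) (s, r)) (x := x.2)
      (fun r => by rw [pd2_eq hf.pd1.diff]; exact hasDerivAt_pd2 hf.pd1.diff (s, r))
      (by fun_prop) hx.2
  have cont_in : ∀ F : ℝ × ℝ → ℝ, Continuous F →
      Continuous (fun s => ∫ r in (0:ℝ)..(2*π), F (s, r)) := fun F hF =>
    intervalIntegral.continuous_parametric_intervalIntegral_of_continuous' (f := fun s r => F (s, r)) hF _ _
  have k1 := cont_in (fun p => f p ^ 2 + pd2 f p ^ 2) (by fun_prop)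
  have k2 := cont_in (fun p => pd1 f p ^ 2 + pd2 (pd1 f) p ^ 2) (by fun_prop)
  have hD : ∫ s in (0:ℝ)..(2*π), (f (s, x.2) ^ 2 + pd1 f (s, x.2) ^ 2) ≤
      ∫ s in (0:ℝ)..(2*π), (2 * (∫ r in (0:ℝ)..(2*π), (f (s, r) ^ 2 + pd2 f (s, r) ^ 2))
        + 2 * ∫ r in (0:ℝ)..(2*π), (pd1 f (s, r) ^ 2 + pd2 (pd1 f) (s, r) ^ 2)) :=
    intervalIntegral.integral_mono_on hpi (Continuous.intervalIntegrable (by fun_prop) _ _)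
      (Continuous.intervalIntegrable (by fun_prop) _ _) (fun s _ => add_le_add (hB s) (hC s))
  generalize ∫ s in (0:ℝ)..(2*π), (f (s, x.2) ^ 2 + pd1 f (s, x.2) ^ 2) = J at hA hD
  rw [intervalIntegral.integral_add (Continuous.intervalIntegrable (by fun_prop) _ _)
    (Continuous.intervalIntegrable (by fun_prop) _ _), intervalIntegral.integral_const_mul,
    intervalIntegral.integral_const_mul,
    ← int_box (f := fun p => f p ^ 2 + pd2 f p ^ 2) (by fun_prop),
    ← int_box (f := fun p => pd1 f p ^ 2 + pd2 (pd1 f) p ^ 2) (by fun_prop),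
    MeasureTheory.integral_add (intOn (by fun_prop)) (intOn (by fun_prop)),
    MeasureTheory.integral_add (intOn (by fun_prop)) (intOn (by fun_prop))] at hD
  have e : ∀ h : ℝ × ℝ → ℝ, ∫ x in Omega2, h x ^ 2 = nrm h ^ 2 := by
    intro h
    rw [nrm_sq]
    simp only [ip, sq]
  simp only [e] at hD
  have hg := grad_le hf
  have hh := hess_eq hf
  have n1 := nrm_nonneg f
  have n2 := nrm_nonneg (lap f)
  refine abs_le_of_sq_le_sq ?_ (by positivity)
  nlinarith [sq_nonneg (nrm (pd1 (pd1 f))), sq_nonneg (nrm (pd2 (pd2 f))),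
    sq_nonneg (nrm (pd2 (pd1 f))), mul_nonneg n1 n2]

/-! ### Parseval's identity -/

/-- The `n`-th Fourier coefficient of a function on `[0,2π]`. -/
def coef1 (g : ℝ → ℂ) (n : ℤ) : ℂ :=
  (2*π)⁻¹ • ∫ x in (0:ℝ)..(2*π), g x * Complex.exp (-(Complex.I) * ((n:ℂ) * (x:ℂ)))

lemma parseval1 {g : ℝ → ℂ} (hg : Continuous g) :
    HasSum (fun n => ‖coef1 g n‖ ^ 2) ((2*π)⁻¹ * ∫ x in (0:ℝ)..(2*π), ‖g x‖ ^ 2) := by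
  have hpi : (0:ℝ) < 2*π := by positivity
  have hL2 : MemLp g 2 (volume.restrict (Ioc 0 (2*π))) := by
    have h : MemLp g 2 (volume.restrict (Icc 0 (2*π))) := by
      obtain ⟨C, hC⟩ := isCompact_Icc.exists_bound_of_continuousOn (hg.continuousOn (s := Icc 0 (2*π)))
      refine MemLp.of_bound hg.aestronglyMeasurable C ?_
      exact (ae_restrict_iff' measurableSet_Icc).2 (ae_of_all _ hC)
    exact h.mono_measure (Measure.restrict_mono Ioc_subset_Icc_self le_rfl)
  have h := hasSum_sq_fourierCoeffOn hpi hL2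
  simp only [sub_zero, smul_eq_mul] at h
  convert h using 3 with n
  rw [fourierCoeffOn_eq_integral, coef1]
  simp only [sub_zero, one_div, smul_eq_mul]
  congr 2
  refine intervalIntegral.integral_congr fun x _ => ?_
  rw [fourier_coe_apply, mul_comm]
  congr 2
  have : (π : ℂ) ≠ 0 := by exact_mod_cast Real.pi_ne_zero
  push_cast
  rw [sub_zero]
  field_simp

lemma cont_coef1 {F : ℝ × ℝ → ℂ} (hF : Continuous F) (n : ℤ) :
    Continuous (fun y => coef1 (fun x => F (x, y)) n) := by
  unfold coef1
  refine Continuous.fun_const_smul ?_ _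
  refine intervalIntegral.continuous_parametric_intervalIntegral_of_continuous'
    (f := fun y x => F (x, y) * Complex.exp (-(Complex.I) * ((n:ℂ) * (x:ℂ)))) ?_ _ _
  unfold Function.uncurry
  fun_prop

lemma fc_eq_coef1 {f : ℝ × ℝ → ℝ} (hf : Continuous f) (ℓ : ℤ × ℤ) :
    fc f ℓ = coef1 (fun y => coef1 (fun x => (f (x, y) : ℂ)) ℓ.1) ℓ.2 := by
  unfold fc
  rw [int_box_swap (by fun_prop)]
  unfold coef1
  simp only [Complex.real_smul]
  rw [show (((2*π)^2)⁻¹ : ℝ) = (2*π)⁻¹ * (2*π)⁻¹ by rw [← mul_inv, sq]]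
  push_cast
  rw [mul_assoc, ← intervalIntegral.integral_const_mul]
  congr 2
  funext y
  rw [mul_assoc, ← intervalIntegral.integral_mul_const]
  congr 2
  funext x
  rw [mul_assoc, ← Complex.exp_add]
  congr 2
  ring

/-- Parseval's identity on the box, by applying the one-dimensional identity in each variable
and summing the rows under the integral sign. -/
lemma parseval {f : ℝ × ℝ → ℝ} (hf : Continuous f) :
    HasSum (fun ℓ : ℤ × ℤ => ‖fc f ℓ‖ ^ 2) (((2*π)^2)⁻¹ * ip f f) := by
  have hpi : (0:ℝ) < 2*π := by positivity
  set G : ℤ → ℝ → ℂ := fun k y => coef1 (fun x => (f (x, y) : ℂ)) k with hG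
  have hGc : ∀ k, Continuous (G k) := fun k => cont_coef1 (F := fun p => (f p : ℂ)) (by fun_prop) k
  have hGi : ∀ k, IntegrableOn (fun y => ‖G k y‖ ^ 2) (Ioc 0 (2*π)) := fun k =>
    (((hGc k).norm.pow 2).continuousOn.integrableOn_compact isCompact_Icc).mono_set
      Ioc_subset_Icc_self
  set H : ℝ → ℝ := fun y => (2*π)⁻¹ * ∫ x in (0:ℝ)..(2*π), f (x, y) ^ 2 with hH
  have hHc : Continuous H := by
    refine continuous_const.mul ?_
    exact intervalIntegral.continuous_parametric_intervalIntegral_of_continuous'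
      (f := fun y x => f (x, y) ^ 2) (by unfold Function.uncurry; fun_prop) _ _
  have hHi : IntegrableOn H (Ioc 0 (2*π)) :=
    (hHc.continuousOn.integrableOn_compact isCompact_Icc).mono_set Ioc_subset_Icc_self
  have inner : ∀ y, HasSum (fun k => ‖G k y‖ ^ 2) (H y) := by
    intro y
    have := parseval1 (g := fun x => (f (x, y) : ℂ)) (by fun_prop)
    simpa [hG, hH] using this
  have hsum : Summable fun k => ∫ y in Ioc 0 (2*π), ‖‖G k y‖ ^ 2‖ := by
    refine summable_of_sum_le (c := ∫ y in Ioc 0 (2*π), H y)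
      (fun k => integral_nonneg fun y => norm_nonneg _) ?_
    intro s
    simp only [norm_pow, norm_norm]
    rw [← integral_finsetSum _ (fun k _ => hGi k)]
    refine integral_mono (integrable_finsetSum _ (fun k _ => hGi k)) hHi ?_
    intro y
    exact sum_le_hasSum s (fun k _ => by positivity) (inner y)
  have outer := hasSum_integral_of_summable_integral_norm hGi hsum
  simp only [fun y => (inner y).tsum_eq] at outer
  have fib : ∀ k, HasSum (fun l => ‖fc f (k, l)‖ ^ 2)
      ((2*π)⁻¹ * ∫ y in Ioc 0 (2*π), ‖G k y‖ ^ 2) := by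
    intro k
    have := parseval1 (hGc k)
    rw [intervalIntegral.integral_of_le hpi.le] at this
    simpa only [fc_eq_coef1 hf] using this
  have outer' := outer.mul_left (2*π)⁻¹
  have hS : Summable (fun ℓ : ℤ × ℤ => ‖fc f ℓ‖ ^ 2) := by
    rw [summable_prod_of_nonneg (fun ℓ => by positivity)]
    refine ⟨fun k => (fib k).summable, ?_⟩
    simp only [fun k => (fib k).tsum_eq]
    exact outer'.summable
  have hval := (hS.hasSum.prod_fiberwise fib).unique outer'
  rw [show ((2*π)^2)⁻¹ * ip f f = (2*π)⁻¹ * ∫ y in Ioc 0 (2*π), H y from ?_]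
  · rw [← hval]; exact hS.hasSum
  · rw [← intervalIntegral.integral_of_le hpi.le, hH, intervalIntegral.integral_const_mul,
      ← int_box_swap (f := fun p => f p ^ 2) (by fun_prop), ← mul_assoc, ← mul_inv, ← sq]
    simp only [ip, sq]

/-! ### The projections in terms of real trigonometric modes -/

/-- The mode `cos(ℓ·x)`. -/
def cs (ℓ : ℤ × ℤ) (x : ℝ × ℝ) : ℝ := Real.cos (ℓ.1 * x.1 + ℓ.2 * x.2)

/-- The mode `sin(ℓ·x)`. -/
def sn (ℓ : ℤ × ℤ) (x : ℝ × ℝ) : ℝ := Real.sin (ℓ.1 * x.1 + ℓ.2 * x.2)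

lemma ip_const_mul_right (c : ℝ) (f g : ℝ × ℝ → ℝ) :
    ip f (fun x => c * g x) = c * ip f g := by
  rw [ip_comm, ip_const_mul_left, ip_comm]

lemma SP.cs (ℓ : ℤ × ℤ) : SP (cs ℓ) where
  smooth := by unfold _root_.cs; fun_prop
  per1 x := by
    unfold _root_.cs
    rw [← Real.cos_add_int_mul_two_pi (ℓ.1 * x.1 + ℓ.2 * x.2) ℓ.1]
    congr 1; ring
  per2 x := by
    unfold _root_.cs
    rw [← Real.cos_add_int_mul_two_pi (ℓ.1 * x.1 + ℓ.2 * x.2) ℓ.2]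
    congr 1; ring

lemma SP.sn (ℓ : ℤ × ℤ) : SP (sn ℓ) where
  smooth := by unfold _root_.sn; fun_prop
  per1 x := by
    unfold _root_.sn
    rw [← Real.sin_add_int_mul_two_pi (ℓ.1 * x.1 + ℓ.2 * x.2) ℓ.1]
    congr 1; ring
  per2 x := by
    unfold _root_.sn
    rw [← Real.sin_add_int_mul_two_pi (ℓ.1 * x.1 + ℓ.2 * x.2) ℓ.2]
    congr 1; ring

lemma phase_deriv1 (ℓ : ℤ × ℤ) (x : ℝ × ℝ) :
    HasDerivAt (fun s : ℝ => (ℓ.1 : ℝ) * s + ℓ.2 * x.2) (ℓ.1 : ℝ) x.1 := by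
  simpa using ((hasDerivAt_id x.1).const_mul (ℓ.1 : ℝ)).add_const ((ℓ.2 : ℝ) * x.2)

lemma phase_deriv2 (ℓ : ℤ × ℤ) (x : ℝ × ℝ) :
    HasDerivAt (fun s : ℝ => (ℓ.1 : ℝ) * x.1 + ℓ.2 * s) (ℓ.2 : ℝ) x.2 := by
  simpa using ((hasDerivAt_id x.2).const_mul (ℓ.2 : ℝ)).const_add ((ℓ.1 : ℝ) * x.1)

lemma hcs1 (ℓ : ℤ × ℤ) (x : ℝ × ℝ) :
    HasDerivAt (fun s => cs ℓ (s, x.2)) (-(ℓ.1 : ℝ) * sn ℓ x) x.1 :=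
  (phase_deriv1 ℓ x).cos.congr_deriv (by simp only [sn]; ring)

lemma hsn1 (ℓ : ℤ × ℤ) (x : ℝ × ℝ) :
    HasDerivAt (fun s => sn ℓ (s, x.2)) ((ℓ.1 : ℝ) * cs ℓ x) x.1 :=
  (phase_deriv1 ℓ x).sin.congr_deriv (by simp only [cs]; ring)

lemma hcs2 (ℓ : ℤ × ℤ) (x : ℝ × ℝ) :
    HasDerivAt (fun s => cs ℓ (x.1, s)) (-(ℓ.2 : ℝ) * sn ℓ x) x.2 :=
  (phase_deriv2 ℓ x).cos.congr_deriv (by simp only [sn]; ring)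

lemma hsn2 (ℓ : ℤ × ℤ) (x : ℝ × ℝ) :
    HasDerivAt (fun s => sn ℓ (x.1, s)) ((ℓ.2 : ℝ) * cs ℓ x) x.2 :=
  (phase_deriv2 ℓ x).sin.congr_deriv (by simp only [cs]; ring)

/-- The normalising constant `(2π)⁻²`. -/
def kap : ℝ := ((2*π)^2)⁻¹

lemma exp_neg_phase (ℓ : ℤ × ℤ) (x : ℝ × ℝ) :
    Complex.exp (-(Complex.I) * ((ℓ.1:ℂ) * (x.1:ℂ) + (ℓ.2:ℂ) * (x.2:ℂ)))
      = (cs ℓ x : ℂ) - Complex.I * (sn ℓ x : ℂ) := by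
  unfold cs sn
  push_cast
  rw [neg_mul, mul_comm Complex.I, ← neg_mul, Complex.exp_mul_I, Complex.cos_neg, Complex.sin_neg]
  ring

lemma exp_phase (ℓ : ℤ × ℤ) (x : ℝ × ℝ) :
    Complex.exp (Complex.I * ((ℓ.1:ℂ) * (x.1:ℂ) + (ℓ.2:ℂ) * (x.2:ℂ)))
      = (cs ℓ x : ℂ) + Complex.I * (sn ℓ x : ℂ) := by
  unfold cs sn
  push_cast
  rw [mul_comm Complex.I, Complex.exp_mul_I]
  ring

lemma fc_eq {f : ℝ × ℝ → ℝ} (hf : Continuous f) (ℓ : ℤ × ℤ) :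
    fc f ℓ = (kap : ℂ) * ((ip f (cs ℓ) : ℂ) - Complex.I * (ip f (sn ℓ) : ℂ)) := by
  have hc := (SP.cs ℓ).cont
  have hs := (SP.sn ℓ).cont
  unfold fc ip
  rw [Complex.real_smul, kap]
  congr 1
  rw [← integral_complex_ofReal, ← integral_complex_ofReal, ← MeasureTheory.integral_const_mul,
    ← MeasureTheory.integral_sub (intOn (by fun_prop)) (intOn (by fun_prop))]
  congr 1
  funext x
  rw [exp_neg_phase]
  push_cast
  ring

lemma low_finite (N : ℝ) : {ℓ : ℤ × ℤ | ((ℓ.1:ℝ)^2 + (ℓ.2:ℝ)^2) ≤ N^2}.Finite := by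
  refine (((Set.finite_Icc (-⌈|N|⌉) ⌈|N|⌉).prod (Set.finite_Icc (-⌈|N|⌉) ⌈|N|⌉))).subset ?_
  rintro ⟨a, b⟩ h
  simp only [mem_ofPred_eq] at h
  have key : ∀ c : ℤ, (c:ℝ)^2 ≤ N^2 → c ∈ Icc (-⌈|N|⌉) ⌈|N|⌉ := by
    intro c hc
    have h1 : |(c:ℝ)| ≤ |N| := sq_le_sq.1 hc
    have h2 : |(c:ℝ)| ≤ (⌈|N|⌉ : ℝ) := h1.trans (Int.le_ceil _)
    have h3 : |c| ≤ ⌈|N|⌉ := by exact_mod_cast h2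
    exact abs_le.1 h3
  exact ⟨key a (by nlinarith [sq_nonneg (b:ℝ)]), key b (by nlinarith [sq_nonneg (a:ℝ)])⟩

/-- The finite set of modes `|ℓ|² ≤ N²`. -/
def low (N : ℝ) : Finset (ℤ × ℤ) := (low_finite N).toFinset

lemma mem_low {N : ℝ} {ℓ : ℤ × ℤ} : ℓ ∈ low N ↔ ((ℓ.1:ℝ)^2 + (ℓ.2:ℝ)^2) ≤ N^2 := by
  simp [low]

lemma neg_mem_low {N : ℝ} {ℓ : ℤ × ℤ} : -ℓ ∈ low N ↔ ℓ ∈ low N := by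
  simp [mem_low]

lemma PN_eq (N : ℝ) {f : ℝ × ℝ → ℝ} (hf : Continuous f) (x : ℝ × ℝ) :
    PN N f x = ∑ ℓ ∈ low N, kap * (ip f (cs ℓ) * cs ℓ x + ip f (sn ℓ) * sn ℓ x) := by
  unfold PN
  rw [tsum_eq_sum (s := low N)]
  · refine Finset.sum_congr rfl fun ℓ hℓ => ?_
    rw [if_pos (mem_low.1 hℓ), fc_eq hf, exp_phase]
    simp
    ring
  · intro ℓ hℓ
    rw [if_neg (mem_low.not.1 hℓ)]

lemma SP.PN (N : ℝ) {f : ℝ × ℝ → ℝ} (hf : Continuous f) : SP (PN N f) := by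
  rw [funext (PN_eq N hf)]
  exact SP.sum _ fun ℓ => (SP.const _).mul
    (((SP.const _).mul (SP.cs ℓ)).add ((SP.const _).mul (SP.sn ℓ)))

lemma pd1_PN (N : ℝ) {f : ℝ × ℝ → ℝ} (hf : SP f) : pd1 (PN N f) = PN N (pd1 f) := by
  funext x
  rw [PN_eq N hf.pd1.cont, funext (PN_eq N hf.cont)]
  refine HasDerivAt.deriv ?_
  refine HasDerivAt.fun_sum fun ℓ _ => ?_
  rw [ip_pd1 hf (SP.cs ℓ), ip_pd1 hf (SP.sn ℓ), show pd1 (cs ℓ) = fun x => -(ℓ.1:ℝ) * sn ℓ x from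
    funext fun x => (hcs1 ℓ x).deriv, show pd1 (sn ℓ) = fun x => (ℓ.1:ℝ) * cs ℓ x from
    funext fun x => (hsn1 ℓ x).deriv, ip_const_mul_right, ip_const_mul_right]
  refine ((((hcs1 ℓ x).const_mul _).add ((hsn1 ℓ x).const_mul _)).const_mul kap).congr_deriv ?_
  ring

lemma pd2_PN (N : ℝ) {f : ℝ × ℝ → ℝ} (hf : SP f) : pd2 (PN N f) = PN N (pd2 f) := by
  funext x
  rw [PN_eq N hf.pd2.cont, funext (PN_eq N hf.cont)]
  refine HasDerivAt.deriv ?_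
  refine HasDerivAt.fun_sum fun ℓ _ => ?_
  rw [ip_pd2 hf (SP.cs ℓ), ip_pd2 hf (SP.sn ℓ), show pd2 (cs ℓ) = fun x => -(ℓ.2:ℝ) * sn ℓ x from
    funext fun x => (hcs2 ℓ x).deriv, show pd2 (sn ℓ) = fun x => (ℓ.2:ℝ) * cs ℓ x from
    funext fun x => (hsn2 ℓ x).deriv, ip_const_mul_right, ip_const_mul_right]
  refine ((((hcs2 ℓ x).const_mul _).add ((hsn2 ℓ x).const_mul _)).const_mul kap).congr_deriv ?_
  ring

lemma lap_PN (N : ℝ) {f : ℝ × ℝ → ℝ} (hf : SP f) : lap (PN N f) = PN N (lap f) := by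
  funext x
  change pd1 (pd1 (PN N f)) x + pd2 (pd2 (PN N f)) x = _
  rw [pd1_PN N hf, pd2_PN N hf, pd1_PN N hf.pd1, pd2_PN N hf.pd2, PN_eq N hf.pd1.pd1.cont,
    PN_eq N hf.pd2.pd2.cont, PN_eq N hf.lap.cont, ← Finset.sum_add_distrib]
  refine Finset.sum_congr rfl fun ℓ _ => ?_
  have h : ∀ {g : ℝ × ℝ → ℝ}, Continuous g →
      ip (lap f) g = ip (pd1 (pd1 f)) g + ip (pd2 (pd2 f)) g :=
    fun hg => ip_add_left hf.pd1.pd1.cont hf.pd2.pd2.cont hg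
  rw [h (SP.cs ℓ).cont, h (SP.sn ℓ).cont]
  ring

lemma ip_PN (N : ℝ) {f g : ℝ × ℝ → ℝ} (hf : Continuous f) (hg : Continuous g) :
    ip (PN N f) g = ∑ ℓ ∈ low N, kap * (ip f (cs ℓ) * ip (cs ℓ) g + ip f (sn ℓ) * ip (sn ℓ) g) := by
  have hc := fun ℓ => (SP.cs ℓ).cont
  have hs := fun ℓ => (SP.sn ℓ).cont
  rw [funext (PN_eq N hf)]
  conv_lhs => unfold ip
  simp only [Finset.sum_mul]
  rw [MeasureTheory.integral_finsetSum]
  · refine Finset.sum_congr rfl fun ℓ _ => ?_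
    conv_rhs => rw [← ip_const_mul_left, ← ip_const_mul_left,
      ← ip_add_left (by fun_prop) (by fun_prop) hg, ← ip_const_mul_left]
    rfl
  · intro ℓ _
    exact intOn (by fun_prop)

/-- `P_N` is symmetric for the `L²` inner product. -/
lemma ip_PN_symm (N : ℝ) {f g : ℝ × ℝ → ℝ} (hf : Continuous f) (hg : Continuous g) :
    ip (PN N f) g = ip f (PN N g) := by
  rw [ip_PN N hf hg, ip_comm f, ip_PN N hg hf]
  refine Finset.sum_congr rfl fun ℓ _ => ?_
  rw [ip_comm g, ip_comm g, ip_comm f, ip_comm f]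
  ring

/-! ### Spectral estimates -/

lemma int_exp1 (k : ℤ) :
    ∫ x in (0:ℝ)..(2*π), Complex.exp (Complex.I * ((k:ℂ) * (x:ℂ))) = if k = 0 then (2*π : ℂ) else 0 := by
  split_ifs with h
  · simp [h]
  · have hk : Complex.I * (k:ℂ) ≠ 0 := mul_ne_zero Complex.I_ne_zero (by exact_mod_cast h)
    simp only [← mul_assoc]
    rw [integral_exp_mul_complex hk]
    have : Complex.exp (Complex.I * k * ((2*π : ℝ):ℂ)) = 1 := by
      rw [Complex.exp_eq_one_iff]
      exact ⟨k, by push_cast; ring⟩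
    rw [this]
    simp

lemma int_exp2 (k : ℤ × ℤ) :
    (kap : ℂ) * ∫ x in Omega2, Complex.exp (Complex.I * ((k.1:ℂ) * (x.1:ℂ) + (k.2:ℂ) * (x.2:ℂ)))
      = if k = 0 then 1 else 0 := by
  rw [int_box (by fun_prop)]
  have hpi : (π : ℂ) ≠ 0 := by exact_mod_cast Real.pi_ne_zero
  simp only [mul_add, Complex.exp_add]
  simp only [intervalIntegral.integral_const_mul, intervalIntegral.integral_mul_const, int_exp1]
  obtain ⟨a, b⟩ := k
  simp only [Prod.mk_eq_zero, kap]
  by_cases ha : a = 0 <;> by_cases hb : b = 0 <;> simp [ha, hb]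
  field_simp

lemma fc_cs (ℓ m : ℤ × ℤ) :
    fc (cs ℓ) m = ((if ℓ = m then 1 else 0) + (if ℓ = -m then 1 else 0)) / 2 := by
  have h1 := int_exp2 (ℓ - m)
  have h2 := int_exp2 (-ℓ - m)
  simp only [sub_eq_zero, neg_eq_iff_eq_neg] at h1 h2
  rw [← h1, ← h2, ← mul_add, ← MeasureTheory.integral_add (intOn (by fun_prop)) (intOn (by fun_prop)),
    mul_div_assoc, ← MeasureTheory.integral_div]
  unfold fc
  rw [Complex.real_smul, kap]
  congr 2
  funext x
  have e1 := exp_phase ℓ x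
  have e2 := exp_neg_phase ℓ x
  have e3 : ((cs ℓ x : ℝ) : ℂ) = (Complex.exp (Complex.I * ((ℓ.1:ℂ) * (x.1:ℂ) + (ℓ.2:ℂ) * (x.2:ℂ)))
    + Complex.exp (-(Complex.I) * ((ℓ.1:ℂ) * (x.1:ℂ) + (ℓ.2:ℂ) * (x.2:ℂ)))) / 2 := by
    rw [e1, e2]; ring
  rw [e3, div_mul_eq_mul_div, add_mul, ← Complex.exp_add, ← Complex.exp_add]
  congr 3
  · simp
    ring
  · simp
    ring

lemma fc_sn (ℓ m : ℤ × ℤ) :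
    fc (sn ℓ) m = ((if ℓ = m then 1 else 0) - (if ℓ = -m then 1 else 0)) / (2 * Complex.I) := by
  have h1 := int_exp2 (ℓ - m)
  have h2 := int_exp2 (-ℓ - m)
  simp only [sub_eq_zero, neg_eq_iff_eq_neg] at h1 h2
  rw [← h1, ← h2, ← mul_sub, ← MeasureTheory.integral_sub (intOn (by fun_prop)) (intOn (by fun_prop)),
    mul_div_assoc, ← MeasureTheory.integral_div]
  unfold fc
  rw [Complex.real_smul, kap]
  congr 2
  funext x
  have e1 := exp_phase ℓ x
  have e2 := exp_neg_phase ℓ x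
  have e3 : ((sn ℓ x : ℝ) : ℂ) = (Complex.exp (Complex.I * ((ℓ.1:ℂ) * (x.1:ℂ) + (ℓ.2:ℂ) * (x.2:ℂ)))
    - Complex.exp (-(Complex.I) * ((ℓ.1:ℂ) * (x.1:ℂ) + (ℓ.2:ℂ) * (x.2:ℂ)))) / (2 * Complex.I) := by
    rw [e1, e2]
    have := Complex.I_ne_zero
    field_simp
    ring
  rw [e3, div_mul_eq_mul_div, sub_mul, ← Complex.exp_add, ← Complex.exp_add]
  congr 3
  · simp
    ring
  · simp
    ring

lemma cs_neg (m : ℤ × ℤ) : cs (-m) = cs m := by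
  funext x
  simp only [cs, Prod.fst_neg, Prod.snd_neg, Int.cast_neg]
  rw [← Real.cos_neg]
  congr 1; ring

lemma sn_neg (m : ℤ × ℤ) : sn (-m) = fun x => -1 * sn m x := by
  funext x
  simp only [sn, Prod.fst_neg, Prod.snd_neg, Int.cast_neg]
  rw [neg_one_mul, ← Real.sin_neg]
  congr 1; ring

/-- `P_N` truncates the Fourier series. -/
lemma fc_PN (N : ℝ) {f : ℝ × ℝ → ℝ} (hf : Continuous f) (m : ℤ × ℤ) :
    fc (PN N f) m = if m ∈ low N then fc f m else 0 := by
  have h1 : fc (PN N f) m = ∑ ℓ ∈ low N,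
      (kap : ℂ) * ((ip f (cs ℓ) : ℂ) * fc (cs ℓ) m + (ip f (sn ℓ) : ℂ) * fc (sn ℓ) m) := by
    rw [fc_eq (SP.PN N hf).cont, ip_PN N hf (SP.cs m).cont, ip_PN N hf (SP.sn m).cont]
    push_cast
    rw [Finset.mul_sum, ← Finset.sum_sub_distrib, Finset.mul_sum]
    refine Finset.sum_congr rfl fun ℓ _ => ?_
    rw [fc_eq (SP.cs ℓ).cont, fc_eq (SP.sn ℓ).cont]
    ring
  have h2 : fc (PN N f) m = ∑ ℓ ∈ low N,
      ((if ℓ = m then (kap : ℂ) * ((ip f (cs ℓ) : ℂ) / 2 + (ip f (sn ℓ) : ℂ) / (2 * Complex.I)) else 0)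
      + (if ℓ = -m then (kap : ℂ) * ((ip f (cs ℓ) : ℂ) / 2 - (ip f (sn ℓ) : ℂ) / (2 * Complex.I)) else 0)) := by
    rw [h1]
    refine Finset.sum_congr rfl fun ℓ _ => ?_
    rw [fc_cs, fc_sn]
    split_ifs <;> ring
  rw [h2, Finset.sum_add_distrib, Finset.sum_ite_eq', Finset.sum_ite_eq']
  simp only [neg_mem_low]
  split_ifs
  · rw [fc_eq hf, cs_neg, sn_neg, ip_const_mul_right]
    push_cast
    have := Complex.I_ne_zero
    field_simp
    ring_nf
    simp
    try ring
  · simp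

lemma fc_pd1 {f : ℝ × ℝ → ℝ} (hf : SP f) (ℓ : ℤ × ℤ) :
    fc (pd1 f) ℓ = Complex.I * ℓ.1 * fc f ℓ := by
  rw [fc_eq hf.pd1.cont, fc_eq hf.cont,
    ip_pd1 hf (SP.cs ℓ), ip_pd1 hf (SP.sn ℓ), show pd1 (cs ℓ) = fun x => -(ℓ.1:ℝ) * sn ℓ x from
    funext fun x => (hcs1 ℓ x).deriv, show pd1 (sn ℓ) = fun x => (ℓ.1:ℝ) * cs ℓ x from
    funext fun x => (hsn1 ℓ x).deriv, ip_const_mul_right, ip_const_mul_right]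
  push_cast
  linear_combination -(kap : ℂ) * ℓ.1 * (ip f (sn ℓ) : ℂ) * Complex.I_mul_I * (-1)

lemma fc_pd2 {f : ℝ × ℝ → ℝ} (hf : SP f) (ℓ : ℤ × ℤ) :
    fc (pd2 f) ℓ = Complex.I * ℓ.2 * fc f ℓ := by
  rw [fc_eq hf.pd2.cont, fc_eq hf.cont,
    ip_pd2 hf (SP.cs ℓ), ip_pd2 hf (SP.sn ℓ), show pd2 (cs ℓ) = fun x => -(ℓ.2:ℝ) * sn ℓ x from
    funext fun x => (hcs2 ℓ x).deriv, show pd2 (sn ℓ) = fun x => (ℓ.2:ℝ) * cs ℓ x from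
    funext fun x => (hsn2 ℓ x).deriv, ip_const_mul_right, ip_const_mul_right]
  push_cast
  linear_combination -(kap : ℂ) * ℓ.2 * (ip f (sn ℓ) : ℂ) * Complex.I_mul_I * (-1)

lemma fc_sub {f g : ℝ × ℝ → ℝ} (hf : Continuous f) (hg : Continuous g) (ℓ : ℤ × ℤ) :
    fc (fun x => f x - g x) ℓ = fc f ℓ - fc g ℓ := by
  rw [fc_eq (f := fun x => f x - g x) (hf.sub hg), fc_eq hf, fc_eq hg, ip_sub_left hf hg (SP.cs ℓ).cont,
    ip_sub_left hf hg (SP.sn ℓ).cont]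
  push_cast
  ring

lemma nrm_PN_le (N : ℝ) {f : ℝ × ℝ → ℝ} (hf : Continuous f) : nrm (PN N f) ≤ nrm f := by
  have h := hasSum_le (fun ℓ => ?_) (parseval (SP.PN N hf).cont) (parseval hf)
  · exact Real.sqrt_le_sqrt (le_of_mul_le_mul_left h (by positivity))
  · rw [fc_PN N hf]
    split_ifs
    · exact le_rfl
    · simp

/-- The high modes gain a factor `N⁻¹` per derivative. -/
lemma nrm_high_le (N : ℝ) {f : ℝ × ℝ → ℝ} (hf : SP f) :
    N * nrm (fun x => f x - PN N f x) ≤ √(nrm (pd1 f) ^ 2 + nrm (pd2 f) ^ 2) := by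
  have hk : (0:ℝ) < ((2*π)^2)⁻¹ := by positivity
  have hP := SP.PN N hf.cont
  have h := hasSum_le (fun ℓ => ?_) ((parseval (hf.sub hP).cont).mul_left (N^2))
    ((parseval hf.pd1.cont).add (parseval hf.pd2.cont))
  · refine Real.le_sqrt_of_sq_le ?_
    rw [mul_pow, nrm_sq, nrm_sq, nrm_sq]
    refine le_of_mul_le_mul_left ?_ hk
    linarith
  · rw [fc_sub hf.cont hP.cont, fc_PN N hf.cont, fc_pd1 hf, fc_pd2 hf]
    simp only [norm_mul, Complex.norm_I, one_mul, mul_pow]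
    rw [← add_mul]
    have e : ∀ k : ℤ, ‖(k:ℂ)‖ ^ 2 = (k:ℝ)^2 := fun k => by simp
    rw [e, e]
    split_ifs with hl
    · simp; positivity
    · rw [sub_zero]
      rw [mem_low, not_le] at hl
      exact mul_le_mul_of_nonneg_right hl.le (by positivity)

/-! ### The nonlinear term -/

/-- A smooth periodic `f` with `‖f‖ ≤ U` and `‖Δf‖ ≤ D`. -/
structure Bdd (U D : ℝ) (f : ℝ × ℝ → ℝ) : Prop where
  sp : SP f
  le : nrm f ≤ U
  lap_le : nrm (lap f) ≤ D

/-- The high-frequency part of a scalar field. -/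
def hi (N : ℝ) (f : ℝ × ℝ → ℝ) : ℝ × ℝ → ℝ := fun x => f x - PN N f x

lemma SP.hi (N : ℝ) {f : ℝ × ℝ → ℝ} (hf : SP f) : SP (hi N f) := hf.sub (SP.PN N hf.cont)

lemma pd1_hi (N : ℝ) {f : ℝ × ℝ → ℝ} (hf : SP f) : pd1 (hi N f) = hi N (pd1 f) := by
  unfold hi
  rw [pd1_sub hf.diff (SP.PN N hf.cont).diff, pd1_PN N hf]

lemma pd2_hi (N : ℝ) {f : ℝ × ℝ → ℝ} (hf : SP f) : pd2 (hi N f) = hi N (pd2 f) := by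
  unfold hi
  rw [pd2_sub hf.diff (SP.PN N hf.cont).diff, pd2_PN N hf]

namespace Bdd

variable {U D : ℝ} {f : ℝ × ℝ → ℝ}

lemma U_nonneg (h : Bdd U D f) : 0 ≤ U := (nrm_nonneg f).trans h.le

lemma D_nonneg (h : Bdd U D f) : 0 ≤ D := (nrm_nonneg _).trans h.lap_le

lemma PN (h : Bdd U D f) (N : ℝ) : Bdd U D (PN N f) where
  sp := SP.PN N h.sp.cont
  le := (nrm_PN_le N h.sp.cont).trans h.le
  lap_le := by
    rw [lap_PN N h.sp]
    exact (nrm_PN_le N h.sp.lap.cont).trans h.lap_le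

lemma sup_le (h : Bdd U D f) : ∀ x ∈ Omega2, |f x| ≤ 2 * (U + D) := fun x hx =>
  (sobolev2 h.sp hx).trans (by linarith [h.le, h.lap_le])

lemma grad (h : Bdd U D f) : nrm (pd1 f) ^ 2 + nrm (pd2 f) ^ 2 ≤ U * D :=
  (grad_le h.sp).trans (mul_le_mul h.le h.lap_le (nrm_nonneg _) h.U_nonneg)

lemma pd1_le (h : Bdd U D f) : nrm (pd1 f) ≤ √(U * D) :=
  Real.le_sqrt_of_sq_le (by linarith [h.grad, sq_nonneg (nrm (pd2 f))])

lemma pd2_le (h : Bdd U D f) : nrm (pd2 f) ≤ √(U * D) :=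
  Real.le_sqrt_of_sq_le (by linarith [h.grad, sq_nonneg (nrm (pd1 f))])

lemma hi_le (h : Bdd U D f) (N : ℝ) : N * nrm (hi N f) ≤ √(U * D) :=
  (nrm_high_le N h.sp).trans (Real.sqrt_le_sqrt h.grad)

lemma hess (h : Bdd U D f) :
    nrm (pd1 (pd1 f)) ^ 2 + 2 * nrm (pd2 (pd1 f)) ^ 2 + nrm (pd2 (pd2 f)) ^ 2 ≤ D ^ 2 := by
  rw [hess_eq h.sp]
  exact pow_le_pow_left₀ (nrm_nonneg _) h.lap_le 2

lemma pd1_hi_le (h : Bdd U D f) (N : ℝ) : N * nrm (pd1 (hi N f)) ≤ D := by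
  rw [pd1_hi N h.sp]
  refine (nrm_high_le N h.sp.pd1).trans (Real.sqrt_le_iff.2 ⟨h.D_nonneg, ?_⟩)
  linarith [h.hess, sq_nonneg (nrm (pd2 (pd1 f))), sq_nonneg (nrm (pd2 (pd2 f)))]

lemma pd2_hi_le (h : Bdd U D f) (N : ℝ) : N * nrm (pd2 (hi N f)) ≤ D := by
  rw [pd2_hi N h.sp]
  refine (nrm_high_le N h.sp.pd2).trans (Real.sqrt_le_iff.2 ⟨h.D_nonneg, ?_⟩)
  rw [pd1_pd2_comm h.sp]
  linarith [h.hess, sq_nonneg (nrm (pd2 (pd1 f))), sq_nonneg (nrm (pd1 (pd1 f)))]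

end Bdd

/-- A trilinear integral with one factor bounded in `L^∞`, one factor of high frequency, and one
factor bounded in `L²`. -/
lemma tri {f g h : ℝ × ℝ → ℝ} {S N α β : ℝ} (hf : Continuous f) (hg : Continuous g)
    (hh : Continuous h) (hS : 0 ≤ S) (hN : 0 ≤ N) (hfS : ∀ x ∈ Omega2, |f x| ≤ S)
    (hgα : N * nrm g ≤ α) (hhβ : nrm h ≤ β) :
    N * |∫ x in Omega2, f x * g x * h x| ≤ S * (α * β) := by
  have h1 := mul_le_mul_of_nonneg_left (trilin_le hf hg hh hS hfS) hN
  have h2 : N * nrm g * nrm h ≤ α * β :=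
    mul_le_mul hgα hhβ (nrm_nonneg _) ((mul_nonneg hN (nrm_nonneg _)).trans hgα)
  have h3 := mul_le_mul_of_nonneg_left h2 hS
  nlinarith

lemma ip_adv {v1 v2 f g : ℝ × ℝ → ℝ} (h1 : SP v1) (h2 : SP v2) (hf : SP f) (hg : SP g) :
    ip (adv (fun x => (v1 x, v2 x)) f) g
      = (∫ x in Omega2, v1 x * pd1 f x * g x) + ∫ x in Omega2, v2 x * pd2 f x * g x := by
  unfold ip adv
  simp only [add_mul]
  exact MeasureTheory.integral_add (intOn ((h1.mul hf.pd1).mul hg).cont)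
    (intOn ((h2.mul hf.pd2).mul hg).cont)

lemma SP.adv {v1 v2 f : ℝ × ℝ → ℝ} (h1 : SP v1) (h2 : SP v2) (hf : SP f) :
    SP (adv (fun x => (v1 x, v2 x)) f) := (h1.mul hf.pd1).add (h2.mul hf.pd2)

/-- The pairing of one component of the castrated nonlinearity with the corresponding
component of the solution gains a full factor `N⁻¹`, since every term contains a high-frequency
factor. -/
lemma nonlin_le {U D N : ℝ} (hN : 0 ≤ N) {a b f : ℝ × ℝ → ℝ} (ha : Bdd U D a) (hb : Bdd U D b)
    (hf : Bdd U D f) :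
    N * |ip (adv (fun x => (PN N a x, PN N b x)) (hi N f)) (PN N f)
      + ip (adv (fun x => (hi N a x, hi N b x)) f) (PN N f)
      + ip (adv (fun x => (a x, b x)) f) (hi N f)| ≤ 12 * (U + D) * (U * D) := by
  have hU := ha.U_nonneg
  have hD := ha.D_nonneg
  have hS : 0 ≤ 2 * (U + D) := by linarith
  have hRR : √(U * D) * √(U * D) = U * D := Real.mul_self_sqrt (mul_nonneg hU hD)
  have ha' := ha.PN N
  have hb' := hb.PN N
  have hf' := hf.PN N
  have sa := ha.sp.hi N
  have sb := hb.sp.hi N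
  have sf := hf.sp.hi N
  rw [ip_adv ha'.sp hb'.sp sf hf'.sp, ip_adv sa sb hf.sp hf'.sp, ip_adv ha.sp hb.sp hf.sp sf]
  have t1 := tri ha'.sp.cont sf.pd1.cont hf'.sp.cont hS hN ha'.sup_le (hf.pd1_hi_le N) hf'.le
  have t2 := tri hb'.sp.cont sf.pd2.cont hf'.sp.cont hS hN hb'.sup_le (hf.pd2_hi_le N) hf'.le
  have t3 := tri hf'.sp.cont sa.cont hf.sp.pd1.cont hS hN hf'.sup_le (ha.hi_le N) hf.pd1_le
  have t4 := tri hf'.sp.cont sb.cont hf.sp.pd2.cont hS hN hf'.sup_le (hb.hi_le N) hf.pd2_le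
  have t5 := tri ha.sp.cont sf.cont hf.sp.pd1.cont hS hN ha.sup_le (hf.hi_le N) hf.pd1_le
  have t6 := tri hb.sp.cont sf.cont hf.sp.pd2.cont hS hN hb.sup_le (hf.hi_le N) hf.pd2_le
  rw [hRR] at t3 t4 t5 t6
  have e3 : ∀ p q r : ℝ × ℝ → ℝ, (∫ x in Omega2, p x * q x * r x) = ∫ x in Omega2, r x * p x * q x :=
    fun p q r => by congr 1; funext x; ring
  have e5 : ∀ p q r : ℝ × ℝ → ℝ, (∫ x in Omega2, p x * q x * r x) = ∫ x in Omega2, p x * r x * q x :=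
    fun p q r => by congr 1; funext x; ring
  rw [e3 (hi N a), e3 (hi N b), e5 a, e5 b]
  set I1 := ∫ x in Omega2, PN N a x * pd1 (hi N f) x * PN N f x
  set I2 := ∫ x in Omega2, PN N b x * pd2 (hi N f) x * PN N f x
  set I3 := ∫ x in Omega2, PN N f x * hi N a x * pd1 f x
  set I4 := ∫ x in Omega2, PN N f x * hi N b x * pd2 f x
  set I5 := ∫ x in Omega2, a x * hi N f x * pd1 f x
  set I6 := ∫ x in Omega2, b x * hi N f x * pd2 f x
  have tri6 : |I1 + I2 + (I3 + I4) + (I5 + I6)| ≤ |I1| + |I2| + |I3| + |I4| + |I5| + |I6| := by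
    have := abs_add_le (I1 + I2 + (I3 + I4)) (I5 + I6)
    have := abs_add_le (I1 + I2) (I3 + I4)
    have := abs_add_le I1 I2
    have := abs_add_le I3 I4
    have := abs_add_le I5 I6
    linarith
  have := mul_le_mul_of_nonneg_left tri6 hN
  linarith

/-- Pairing one component of the equation with that component of the solution. -/
lemma energy_comp {N lam : ℝ} {a b f g : ℝ × ℝ → ℝ} (ha : SP a) (hb : SP b) (hf : SP f)
    (hg : ∀ x, g x = -lap (lap f) x - lam * lap f x
      - PN N (adv (fun x => (PN N a x, PN N b x)) (hi N f)) x
      - PN N (adv (fun x => (hi N a x, hi N b x)) f) x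
      - (adv (fun x => (a x, b x)) f x - PN N (adv (fun x => (a x, b x)) f) x)) :
    ip g f = -nrm (lap f) ^ 2 - lam * ip (lap f) f
      - (ip (adv (fun x => (PN N a x, PN N b x)) (hi N f)) (PN N f)
        + ip (adv (fun x => (hi N a x, hi N b x)) f) (PN N f)
        + ip (adv (fun x => (a x, b x)) f) (hi N f)) := by
  have A1 := (SP.adv (SP.PN N ha.cont) (SP.PN N hb.cont) (hf.hi N)).cont
  have A2 := (SP.adv (ha.hi N) (hb.hi N) hf).cont
  have A3 := (SP.adv ha hb hf).cont
  set F1 := adv (fun x => (PN N a x, PN N b x)) (hi N f)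
  set F2 := adv (fun x => (hi N a x, hi N b x)) f
  set F3 := adv (fun x => (a x, b x)) f
  have P1 := (SP.PN N A1).cont
  have P2 := (SP.PN N A2).cont
  have P3 := (SP.PN N A3).cont
  have L := hf.lap.cont
  have LL := hf.lap.lap.cont
  have e : g = fun x => (((-1 * lap (lap f) x - lam * lap f x) - PN N F1 x) - PN N F2 x)
      - (F3 x - PN N F3 x) := by
    funext x
    rw [hg x]
    ring
  have h3 : ip F3 (hi N f) = ip F3 f - ip (PN N F3) f := by
    rw [ip_PN_symm N A3 hf.cont, ip_comm F3 (hi N f), ip_comm F3 f, ip_comm F3 (PN N f)]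
    exact ip_sub_left hf.cont (SP.PN N hf.cont).cont A3
  rw [e, ip_sub_left (by fun_prop) (by fun_prop) hf.cont,
    ip_sub_left (by fun_prop) (by fun_prop) hf.cont,
    ip_sub_left (by fun_prop) (by fun_prop) hf.cont,
    ip_sub_left (by fun_prop) (by fun_prop) hf.cont,
    ip_sub_left A3 P3 hf.cont, ip_const_mul_left, ip_const_mul_left,
    ip_PN_symm N A1 hf.cont, ip_PN_symm N A2 hf.cont, h3, ip_lap hf.lap hf, nrm_sq]
  ring

lemma l2sq_eq {a b : ℝ × ℝ → ℝ} (ha : Continuous a) (hb : Continuous b) :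
    l2sq (fun x => (a x, b x)) = nrm a ^ 2 + nrm b ^ 2 := by
  rw [nrm_sq, nrm_sq]
  unfold l2sq ip
  rw [← MeasureTheory.integral_add (intOn (by fun_prop)) (intOn (by fun_prop))]
  congr 1
  funext x
  ring

lemma l2sqLap_eq {a b : ℝ × ℝ → ℝ} (ha : SP a) (hb : SP b) :
    l2sqLap (fun x => (a x, b x)) = nrm (lap a) ^ 2 + nrm (lap b) ^ 2 :=
  l2sq_eq ha.lap.cont hb.lap.cont

/-- The energy inequality at a fixed time: with `C* = 192` and `N* = 1` the nonlinearity is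
absorbed by the dissipation, uniformly in the size of the solution. -/
lemma energy_ineq {lam : ℝ} (hlam : 0 < lam) {v w : ℝ × ℝ → ℝ × ℝ}
    (ha : SP fun x => (v x).1) (hb : SP fun x => (v x).2) {N : ℝ}
    (hN : N = 192 * (√(l2sq v) + 1))
    (hw : ∀ x, w x + lapVec (lapVec v) x + lam • lapVec v x
      = -(PNvec N (advVec (PNvec N v) (highN N v)) x)
        - PNvec N (advVec (highN N v) v) x
        - (advVec v v x - PNvec N (advVec v v) x)) :
    2 * (ip (fun x => (w x).1) (fun x => (v x).1) + ip (fun x => (w x).2) (fun x => (v x).2))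
      ≤ 4 * (max lam 1) ^ 2 * l2sq v - (l2sq v + l2sqLap v) := by
  have E1 := energy_comp (N := N) (lam := lam) (g := fun x => (w x).1) ha hb ha (by
    intro x
    have h := congrArg Prod.fst (hw x)
    change (w x).1 + lap (lap fun x => (v x).1) x + lam * lap (fun x => (v x).1) x
      = -(PN N (adv (fun x => (PN N (fun x => (v x).1) x, PN N (fun x => (v x).2) x))
          (hi N fun x => (v x).1)) x)
        - PN N (adv (fun x => (hi N (fun x => (v x).1) x, hi N (fun x => (v x).2) x))
          (fun x => (v x).1)) x
        - (adv (fun x => ((v x).1, (v x).2)) (fun x => (v x).1) x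
          - PN N (adv (fun x => ((v x).1, (v x).2)) (fun x => (v x).1)) x) at h
    linarith)
  have E2 := energy_comp (N := N) (lam := lam) (g := fun x => (w x).2) ha hb hb (by
    intro x
    have h := congrArg Prod.snd (hw x)
    change (w x).2 + lap (lap fun x => (v x).2) x + lam * lap (fun x => (v x).2) x
      = -(PN N (adv (fun x => (PN N (fun x => (v x).1) x, PN N (fun x => (v x).2) x))
          (hi N fun x => (v x).2)) x)
        - PN N (adv (fun x => (hi N (fun x => (v x).1) x, hi N (fun x => (v x).2) x))
          (fun x => (v x).2)) x
        - (adv (fun x => ((v x).1, (v x).2)) (fun x => (v x).2) x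
          - PN N (adv (fun x => ((v x).1, (v x).2)) (fun x => (v x).2)) x) at h
    linarith)
  have hU2 : l2sq v = nrm (fun x => (v x).1) ^ 2 + nrm (fun x => (v x).2) ^ 2 :=
    l2sq_eq ha.cont hb.cont
  have hD2 : l2sqLap v = nrm (lap fun x => (v x).1) ^ 2 + nrm (lap fun x => (v x).2) ^ 2 :=
    l2sqLap_eq ha hb
  generalize hga : (fun x => (v x).1) = a at *
  generalize hgb : (fun x => (v x).2) = b at *
  have hv : (fun x => ((v x).1, (v x).2)) = fun x => (a x, b x) := by rw [← hga, ← hgb]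
  rw [hv] at E1 E2
  obtain ⟨U, hU⟩ : ∃ U, U = √(l2sq v) := ⟨_, rfl⟩
  obtain ⟨D, hD⟩ : ∃ D, D = √(l2sqLap v) := ⟨_, rfl⟩
  have hU0 : 0 ≤ U := hU ▸ Real.sqrt_nonneg _
  have hD0 : 0 ≤ D := hD ▸ Real.sqrt_nonneg _
  have hUU : l2sq v = U ^ 2 := by
    rw [hU, Real.sq_sqrt]; rw [hU2]; positivity
  have hDD : l2sqLap v = D ^ 2 := by
    rw [hD, Real.sq_sqrt]; rw [hD2]; positivity
  have Ba : Bdd U D a := ⟨ha, abs_le_of_sq_le_sq' (by nlinarith [sq_nonneg (nrm b)]) hU0 |>.2,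
    abs_le_of_sq_le_sq' (by nlinarith [sq_nonneg (nrm (lap b))]) hD0 |>.2⟩
  have Bb : Bdd U D b := ⟨hb, abs_le_of_sq_le_sq' (by nlinarith [sq_nonneg (nrm a)]) hU0 |>.2,
    abs_le_of_sq_le_sq' (by nlinarith [sq_nonneg (nrm (lap a))]) hD0 |>.2⟩
  rw [← hU] at hN
  have hN0 : 0 ≤ N := by rw [hN]; positivity
  have K1 := nonlin_le hN0 Ba Bb Ba
  have K2 := nonlin_le hN0 Ba Bb Bb
  have L1 := ip_le ha.lap.cont ha.cont
  have L2 := ip_le hb.lap.cont hb.cont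
  -- The factor `U` in the trilinear bound is compensated by `N ≥ 192 U`.
  have absorb : ∀ X : ℝ, N * |X| ≤ 12 * (U + D) * (U * D) → -X ≤ (U + D) * D / 16 := by
    intro X hX
    refine (neg_le_abs X).trans ?_
    have h1 : 192 * (U + 1) * |X| ≤ 192 * (U + 1) * ((U + D) * D / 16) := by
      rw [← hN]
      refine hX.trans ?_
      rw [hN]
      nlinarith [mul_nonneg (add_nonneg hU0 hD0) hD0]
    exact le_of_mul_le_mul_left h1 (by positivity)
  have N1 := absorb _ K1
  have N2 := absorb _ K2
  have cs2 : nrm (lap a) * nrm a + nrm (lap b) * nrm b ≤ D * U := by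
    refine abs_le_of_sq_le_sq' ?_ (mul_nonneg hD0 hU0) |>.2
    rw [mul_pow, ← hUU, ← hDD, hU2, hD2]
    nlinarith [sq_nonneg (nrm (lap a) * nrm b - nrm (lap b) * nrm a)]
  have hLin : -(lam * ip (lap a) a) - lam * ip (lap b) b ≤ lam * (D * U) := by
    have := (abs_le.1 L1).1
    have := (abs_le.1 L2).1
    nlinarith
  have hM1 : lam ≤ max lam 1 := le_max_left _ _
  have hM2 : 1 ≤ max lam 1 := le_max_right _ _
  set M := max lam 1
  have hMM : lam * (D * U) ≤ M * (D * U) :=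
    mul_le_mul_of_nonneg_right hM1 (mul_nonneg hD0 hU0)
  have hM3 : U ^ 2 ≤ M ^ 2 * U ^ 2 :=
    le_mul_of_one_le_left (sq_nonneg U) (one_le_pow₀ hM2)
  rw [E1, E2, hUU, hDD]
  rw [hDD] at hD2
  have q1 : 4 * (M * (D * U)) ≤ D ^ 2 + 4 * (M ^ 2 * U ^ 2) := by
    linarith [sq_nonneg (D - 2 * M * U)]
  have q2 : 2 * (U * D) ≤ D ^ 2 + U ^ 2 := by linarith [sq_nonneg (D - U)]
  have q3 : (U + D) * D = U * D + D ^ 2 := by ring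
  rw [q3] at N1 N2
  linarith [sq_nonneg D, sq_nonneg U]

/-! ### Dependence on time -/

lemma smooth_slice_pd1 {F : ℝ × (ℝ × ℝ) → ℝ} (hF : ContDiff ℝ ∞ F) :
    ContDiff ℝ ∞ (fun p : ℝ × (ℝ × ℝ) => pd1 (fun y => F (p.1, y)) p.2) := by
  have hd : Differentiable ℝ F := hF.differentiable (by simp)
  have e : (fun p : ℝ × (ℝ × ℝ) => pd1 (fun y => F (p.1, y)) p.2)
      = fun p => fderiv ℝ F p (0, (1, 0)) := by
    funext p
    have h1 : HasDerivAt (fun s : ℝ => (p.1, (s, p.2.2))) ((0 : ℝ), ((1 : ℝ), (0 : ℝ))) p.2.1 :=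
      (hasDerivAt_const _ _).prodMk ((hasDerivAt_id _).prodMk (hasDerivAt_const _ _))
    exact ((hd p).hasFDerivAt.comp_hasDerivAt p.2.1 h1).deriv
  rw [e]
  exact (hF.fderiv_right (m := ∞) (by simp)).clm_apply contDiff_const

lemma smooth_slice_pd2 {F : ℝ × (ℝ × ℝ) → ℝ} (hF : ContDiff ℝ ∞ F) :
    ContDiff ℝ ∞ (fun p : ℝ × (ℝ × ℝ) => pd2 (fun y => F (p.1, y)) p.2) := by
  have hd : Differentiable ℝ F := hF.differentiable (by simp)
  have e : (fun p : ℝ × (ℝ × ℝ) => pd2 (fun y => F (p.1, y)) p.2)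
      = fun p => fderiv ℝ F p (0, (0, 1)) := by
    funext p
    have h1 : HasDerivAt (fun s : ℝ => (p.1, (p.2.1, s))) ((0 : ℝ), ((0 : ℝ), (1 : ℝ))) p.2.2 :=
      (hasDerivAt_const _ _).prodMk ((hasDerivAt_const _ _).prodMk (hasDerivAt_id _))
    exact ((hd p).hasFDerivAt.comp_hasDerivAt p.2.2 h1).deriv
  rw [e]
  exact (hF.fderiv_right (m := ∞) (by simp)).clm_apply contDiff_const

lemma smooth_slice_lap {F : ℝ × (ℝ × ℝ) → ℝ} (hF : ContDiff ℝ ∞ F) :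
    ContDiff ℝ ∞ (fun p : ℝ × (ℝ × ℝ) => lap (fun y => F (p.1, y)) p.2) :=
  (smooth_slice_pd1 (smooth_slice_pd1 hF)).add (smooth_slice_pd2 (smooth_slice_pd2 hF))

lemma cont_integral {G : ℝ × (ℝ × ℝ) → ℝ} (hG : Continuous G) :
    Continuous (fun t => ∫ x in Omega2, G (t, x)) :=
  continuous_parametric_integral_of_continuous (f := fun t x => G (t, x)) hG isCompact_Omega2

/-- Differentiation under the integral over the compact set `Ω`. -/
lemma hasDerivAt_integral {G : ℝ × (ℝ × ℝ) → ℝ} (hG : ContDiff ℝ ∞ G) (t : ℝ) :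
    HasDerivAt (fun t => ∫ x in Omega2, G (t, x)) (∫ x in Omega2, fderiv ℝ G (t, x) (1, 0)) t := by
  have hd : Differentiable ℝ G := hG.differentiable (by simp)
  have hc : Continuous G := hG.continuous
  have hc' : Continuous (fun p => fderiv ℝ G p (1, 0)) :=
    (hG.continuous_fderiv (by simp)).clm_apply continuous_const
  obtain ⟨C, hC⟩ := ((isCompact_Icc (a := t - 1) (b := t + 1)).prod
    isCompact_Omega2).exists_bound_of_continuousOn hc'.continuousOn
  refine (hasDerivAt_integral_of_dominated_loc_of_deriv_le (μ := volume.restrict Omega2)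
    (F := fun t x => G (t, x)) (F' := fun t x => fderiv ℝ G (t, x) (1, 0))
    (s := Icc (t - 1) (t + 1)) (bound := fun _ => C)
    (Icc_mem_nhds (by linarith) (by linarith)) ?_ ?_ ?_ ?_ ?_ ?_).2
  · exact Filter.Eventually.of_forall fun s =>
      (hc.comp (Continuous.prodMk_right s)).aestronglyMeasurable
  · exact intOn (hc.comp (Continuous.prodMk_right t))
  · exact (hc'.comp (Continuous.prodMk_right t)).aestronglyMeasurable
  · refine (ae_restrict_iff' measurableSet_Omega2).2 (Filter.Eventually.of_forall ?_)
    intro x hx s hs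
    exact hC (s, x) ⟨hs, hx⟩
  · exact intOn continuous_const
  · refine Filter.Eventually.of_forall fun x s _ => ?_
    have h1 : HasDerivAt (fun s : ℝ => (s, x)) ((1 : ℝ), (0 : ℝ × ℝ)) s :=
      (hasDerivAt_id _).prodMk (hasDerivAt_const _ _)
    exact (hd (s, x)).hasFDerivAt.comp_hasDerivAt s h1

lemma energy_hasDerivAt {u : ℝ → ℝ × ℝ → ℝ × ℝ}
    (hu : ContDiff ℝ ∞ (fun p : ℝ × (ℝ × ℝ) => u p.1 p.2)) (t : ℝ) :
    HasDerivAt (fun s => l2sq (u s))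
      (2 * (ip (fun x => (deriv (fun s => u s x) t).1) (fun x => (u t x).1)
        + ip (fun x => (deriv (fun s => u s x) t).2) (fun x => (u t x).2))) t := by
  have h1 : ContDiff ℝ ∞ (fun p : ℝ × (ℝ × ℝ) => (u p.1 p.2).1) := hu.fst
  have h2 : ContDiff ℝ ∞ (fun p : ℝ × (ℝ × ℝ) => (u p.1 p.2).2) := hu.snd
  have hG : ContDiff ℝ ∞ (fun p : ℝ × (ℝ × ℝ) => (u p.1 p.2).1 ^ 2 + (u p.1 p.2).2 ^ 2) :=
    (h1.pow 2).add (h2.pow 2)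
  have hline : ∀ x : ℝ × ℝ, HasDerivAt (fun s : ℝ => (s, x)) ((1 : ℝ), (0 : ℝ × ℝ)) t := fun x =>
    (hasDerivAt_id _).prodMk (hasDerivAt_const _ _)
  have hdu : Differentiable ℝ (fun p : ℝ × (ℝ × ℝ) => u p.1 p.2) := hu.differentiable (by simp)
  have hw : ∀ x, HasDerivAt (fun s => u s x)
      (fderiv ℝ (fun p : ℝ × (ℝ × ℝ) => u p.1 p.2) (t, x) (1, 0)) t := fun x =>
    HasFDerivAt.comp_hasDerivAt (l := fun p : ℝ × (ℝ × ℝ) => u p.1 p.2) t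
      (hdu (t, x)).hasFDerivAt (hline x)
  have hw' : ∀ x, deriv (fun s => u s x) t
      = fderiv ℝ (fun p : ℝ × (ℝ × ℝ) => u p.1 p.2) (t, x) (1, 0) := fun x => (hw x).deriv
  have hwc : Continuous (fun x => deriv (fun s => u s x) t) := by
    rw [funext hw']
    exact ((hu.continuous_fderiv (by simp)).comp (Continuous.prodMk_right t)).clm_apply
      continuous_const
  have huc : Continuous (fun x => u t x) := hu.continuous.comp (Continuous.prodMk_right t)
  have hkey : ∀ x, fderiv ℝ (fun p : ℝ × (ℝ × ℝ) => (u p.1 p.2).1 ^ 2 + (u p.1 p.2).2 ^ 2)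
      (t, x) (1, 0) = 2 * ((deriv (fun s => u s x) t).1 * (u t x).1
        + (deriv (fun s => u s x) t).2 * (u t x).2) := by
    intro x
    have hGd := (hG.differentiable (by simp) (t, x)).hasFDerivAt.comp_hasDerivAt t (hline x)
    have hx := hw x
    rw [← hw'] at hx
    have a1 : HasDerivAt (fun s => (u s x).1) (deriv (fun s => u s x) t).1 t :=
      HasFDerivAt.comp_hasDerivAt (l := Prod.fst) (l' := ContinuousLinearMap.fst ℝ ℝ ℝ) t
        hasFDerivAt_fst hx
    have a2 : HasDerivAt (fun s => (u s x).2) (deriv (fun s => u s x) t).2 t :=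
      HasFDerivAt.comp_hasDerivAt (l := Prod.snd) (l' := ContinuousLinearMap.snd ℝ ℝ ℝ) t
        hasFDerivAt_snd hx
    refine hGd.unique (((a1.pow 2).add (a2.pow 2)).congr_deriv ?_)
    push_cast
    ring
  refine (hasDerivAt_integral hG t).congr_deriv ?_
  simp only [hkey]
  unfold ip
  rw [← MeasureTheory.integral_add (intOn (by fun_prop)) (intOn (by fun_prop)),
    MeasureTheory.integral_const_mul]

/-! ### Grönwall -/

/-- The integrated form of `E' + P ≤ K E`. -/
lemma gronwall {E E' P : ℝ → ℝ} {K T : ℝ} (hE : ∀ t, HasDerivAt E (E' t) t) (hP : Continuous P)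
    (h : ∀ t ∈ Icc (0:ℝ) T, E' t ≤ K * E t - P t) :
    ∀ t ∈ Icc (0:ℝ) T, E t + ∫ s in (0:ℝ)..t, Real.exp (K * (t - s)) * P s
      ≤ Real.exp (K * t) * E 0 := by
  have hI : Continuous fun s => Real.exp (-(K * s)) * P s := by fun_prop
  have hexp : ∀ t, HasDerivAt (fun t => Real.exp (-(K * t))) (Real.exp (-(K * t)) * -K) t := by
    intro t
    exact (((hasDerivAt_id t).const_mul K).neg.congr_deriv (by simp)).exp
  have hg : ∀ t, HasDerivAt
      (fun t => Real.exp (-(K * t)) * E t + ∫ s in (0:ℝ)..t, Real.exp (-(K * s)) * P s)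
      (Real.exp (-(K * t)) * -K * E t + Real.exp (-(K * t)) * E' t
        + Real.exp (-(K * t)) * P t) t := fun t =>
    ((hexp t).mul (hE t)).add (intervalIntegral.integral_hasDerivAt_right
      (hI.intervalIntegrable _ _) (hI.stronglyMeasurableAtFilter _ _) hI.continuousAt)
  have hanti := antitoneOn_of_deriv_nonpos (convex_Icc (0:ℝ) T)
    (fun t _ => (hg t).continuousAt.continuousWithinAt)
    (fun t _ => (hg t).differentiableAt.differentiableWithinAt) (by
      intro t ht
      rw [(hg t).deriv]
      have h1 := h t (interior_subset ht)
      have h2 := Real.exp_pos (-(K * t))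
      have : Real.exp (-(K * t)) * -K * E t + Real.exp (-(K * t)) * E' t
        + Real.exp (-(K * t)) * P t = Real.exp (-(K * t)) * (E' t - (K * E t - P t)) := by ring
      rw [this]
      exact mul_nonpos_of_nonneg_of_nonpos h2.le (by linarith))
  intro t ht
  have h0 := hanti (left_mem_Icc.2 (ht.1.trans ht.2)) ht ht.1
  simp only [mul_zero, neg_zero, Real.exp_zero, one_mul, intervalIntegral.integral_same,
    add_zero] at h0
  have h1 := mul_le_mul_of_nonneg_left h0 (Real.exp_pos (K * t)).le
  refine le_trans (le_of_eq ?_) h1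
  rw [mul_add, ← mul_assoc, ← Real.exp_add, ← intervalIntegral.integral_const_mul]
  simp only [← mul_assoc, ← Real.exp_add]
  rw [add_neg_cancel, Real.exp_zero, one_mul]
  congr 2
  funext s
  congr 2
  ring

/-- Global energy bound for the castrated 2D KSE: there exist `C*, N* > 0`
with `C*·N* ≥ 1` such that every smooth 2π-periodic solution satisfies
`‖u(t)‖²_{L²} + ∫₀ᵗ e^{4(max(λ,1))²(t−s)}(‖u(s)‖²_{L²} + ‖Δu(s)‖²_{L²}) ds
  ≤ e^{4(max(λ,1))²t} ‖u(0)‖²_{L²}`. -/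
theorem stmt15 :
    ∃ Cstar Nstar : ℝ, 0 < Cstar ∧ 0 < Nstar ∧ 1 ≤ Cstar * Nstar ∧
      ∀ lam T : ℝ, 0 < lam → 0 < T →
        ∀ u : ℝ → ℝ × ℝ → ℝ × ℝ, SmoothTS u → (∀ t, Periodic2 (u t)) →
          IsCastratedKSE Cstar Nstar lam T u →
          ∀ t ∈ Set.Icc (0:ℝ) T,
            l2sq (u t)
              + ∫ s in (0:ℝ)..t,
                  Real.exp (4 * (max lam 1)^2 * (t - s)) * (l2sq (u s) + l2sqLap (u s))
              ≤ Real.exp (4 * (max lam 1)^2 * t) * l2sq (u 0) := by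
  refine ⟨192, 1, by norm_num, by norm_num, by norm_num, ?_⟩
  intro lam T hlam _ u hsm hper heq
  have hu : ContDiff ℝ ∞ (fun p : ℝ × (ℝ × ℝ) => u p.1 p.2) := contDiff_infty.2 hsm
  have hut : ∀ t, ContDiff ℝ ∞ (fun x => u t x) := fun t =>
    hu.comp (contDiff_const.prodMk contDiff_id)
  have ha : ∀ t, SP fun x => (u t x).1 := fun t =>
    ⟨(hut t).fst, fun x => congrArg Prod.fst (hper t x).1, fun x => congrArg Prod.fst (hper t x).2⟩
  have hb : ∀ t, SP fun x => (u t x).2 := fun t =>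
    ⟨(hut t).snd, fun x => congrArg Prod.snd (hper t x).1, fun x => congrArg Prod.snd (hper t x).2⟩
  have hE : Continuous fun t => l2sq (u t) :=
    continuous_iff_continuousAt.2 fun t => (energy_hasDerivAt hu t).continuousAt
  have hD : Continuous fun t => l2sqLap (u t) :=
    cont_integral (((smooth_slice_lap hu.fst).continuous.pow 2).add
      ((smooth_slice_lap hu.snd).continuous.pow 2))
  exact gronwall (energy_hasDerivAt hu) (hE.add hD) fun t ht =>
    energy_ineq hlam (ha t) (hb t) rfl (heq t ht)
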